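/- arXiv:1804.06209 — 2 statements merged into one kernel-verified Lean document; each statement's English description precedes it below -/
import Mathlib

section
/- Let a > 0, p ∈ [1,∞], and P f = f''' + a f'. There exists K = K(p,a) > 0 such that for all n ∈ ℕ and all f ∈ W^{3n,p}(-1,0): (1 + 1/a)^{-1}(1+a)^{-n} Σ_{i=0}^n ‖Pⁱ f‖_p ≤ ‖f‖_{3n,p} ≤ Kⁿ Σ_{i=0}^n ‖Pⁱ f‖_p. -/
open MeasureTheory
open scoped ENNReal

/-- The operator `P f = f''' + a f'`. -/
noncomputable def Pop (a : ℝ) (f : ℝ → ℝ) : ℝ → ℝ :=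
  fun x => iteratedDeriv 3 f x + a * deriv f x

/-- The `W^{k,p}(-1,0)` norm `‖f‖_{k,p} = Σ_{i=0}^{k} ‖∂ₓⁱ f‖_{L^p(-1,0)}`. -/
noncomputable def sobNorm (p : ℝ≥0∞) (k : ℕ) (f : ℝ → ℝ) : ℝ≥0∞ :=
  ∑ i ∈ Finset.range (k + 1),
    eLpNorm (iteratedDeriv i f) p (volume.restrict (Set.Ioo (-1 : ℝ) 0))

/-!
The lower bound is the operator bound `‖P f‖_{k,p} ≤ (1 + |a|) ‖f‖_{k+3,p}`, iterated and summed as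
a geometric series. The upper bound iterates `‖f‖_{k+3,p} ≤ C (‖f‖_{k,p} + ‖P f‖_{k,p})`; because
`P` commutes with `∂ₓ`, the constant comes from the case `k = 0` and so does not depend on `k`.
-/

open Set

section Calculus

lemma iteratedDeriv_iteratedDeriv {𝕜 F : Type*} [NontriviallyNormedField 𝕜]
    [NormedAddCommGroup F] [NormedSpace 𝕜 F] (m n : ℕ) (f : 𝕜 → F) :
    iteratedDeriv m (iteratedDeriv n f) = iteratedDeriv (m + n) f := by
  simp only [iteratedDeriv_eq_iterate, Function.iterate_add_apply]

lemma contDiff_iteratedDeriv {𝕜 F : Type*} [NontriviallyNormedField 𝕜]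
    [NormedAddCommGroup F] [NormedSpace 𝕜 F] {m n : ℕ} {f : 𝕜 → F}
    (hf : ContDiff 𝕜 (m + n : ℕ) f) : ContDiff 𝕜 m (iteratedDeriv n f) := by
  rw [iteratedDeriv_eq_iterate]
  exact hf.iterate_deriv' m n

variable {b c : ℝ}

lemma exists_contDiff_nonneg_integral_eq_one_tsupport_subset_Ioo (hbc : b < c) :
    ∃ w : ℝ → ℝ, ContDiff ℝ (⊤ : ℕ∞) w ∧ (∀ x, 0 ≤ w x) ∧ ∫ x in b..c, w x = 1 ∧
      tsupport w ⊆ Ioo b c := by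
  let bump : ContDiffBump ((b + c) / 2) :=
    ⟨(c - b) / 8, (c - b) / 4, by linarith, by linarith⟩
  have hsupp : tsupport (bump.normed volume) ⊆ Ioo b c := by
    rw [bump.tsupport_normed_eq, Real.closedBall_eq_Icc]
    exact Icc_subset_Ioo (by dsimp only [bump]; linarith) (by dsimp only [bump]; linarith)
  refine ⟨bump.normed volume, bump.contDiff_normed, bump.nonneg_normed, ?_, hsupp⟩
  rw [intervalIntegral.integral_eq_integral_of_support_subset
    ((subset_tsupport _).trans (hsupp.trans Ioo_subset_Ioc_self)), bump.integral_normed]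

lemma integral_mul_iteratedDeriv_eq (j : ℕ) {w u : ℝ → ℝ} (hw : ContDiff ℝ j w)
    (hsupp : tsupport w ⊆ Ioo b c) (hu : ContDiff ℝ j u) :
    ∫ x in b..c, w x * iteratedDeriv j u x = (-1) ^ j * ∫ x in b..c, iteratedDeriv j w x * u x := by
  induction j generalizing w with
  | zero => simp
  | succ j ih =>
    have hw' : ContDiff ℝ j (deriv w) := by fun_prop
    have hwb : w b = 0 := image_eq_zero_of_notMem_tsupport fun h => (hsupp h).1.false
    have hwc : w c = 0 := image_eq_zero_of_notMem_tsupport fun h => (hsupp h).2.false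
    have by_parts : ∫ x in b..c, w x * iteratedDeriv (j + 1) u x =
        -∫ x in b..c, deriv w x * iteratedDeriv j u x := by
      rw [intervalIntegral.integral_mul_deriv_eq_deriv_mul (u' := deriv w)
        (v := iteratedDeriv j u), hwb, hwc]
      · ring
      · exact fun x _ => (hw.differentiable (by simp) x).hasDerivAt
      · intro x _
        rw [iteratedDeriv_succ]
        exact (hu.differentiable_iteratedDeriv' j x).hasDerivAt
      · exact hw'.continuous.intervalIntegrable _ _
      · exact (hu.continuous_iteratedDeriv' (j + 1)).intervalIntegrable _ _
    rw [by_parts, ih hw' (tsupport_deriv_subset.trans hsupp) hu.of_succ, iteratedDeriv_succ']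
    ring

lemma norm_sub_le_integral_norm_deriv {E : Type*} [NormedAddCommGroup E] [NormedSpace ℝ E]
    [CompleteSpace E] {u : ℝ → E} (hu : ContDiff ℝ 1 u) {x y : ℝ} (hx : x ∈ Icc b c)
    (hy : y ∈ Icc b c) : ‖u x - u y‖ ≤ ∫ t in b..c, ‖deriv u t‖ := by
  have hu' : Continuous (deriv u) := hu.continuous_deriv le_rfl
  calc ‖u x - u y‖ = ‖∫ t in y..x, deriv u t‖ := by
        rw [intervalIntegral.integral_deriv_eq_sub (fun t _ => hu.differentiable one_ne_zero t)
          (hu'.intervalIntegrable _ _)]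
    _ ≤ ∫ t in uIoc y x, ‖deriv u t‖ := intervalIntegral.norm_integral_le_integral_norm_uIoc
    _ ≤ ∫ t in Ioc b c, ‖deriv u t‖ :=
        setIntegral_mono_set (hu'.norm.integrableOn_Ioc) (.of_forall fun _ => norm_nonneg _)
          (Ioc_subset_Ioc (le_inf hy.1 hx.1) (sup_le hy.2 hx.2)).eventuallyLE
    _ = ∫ t in b..c, ‖deriv u t‖ := (intervalIntegral.integral_of_le (hx.1.trans hx.2)).symm

lemma exists_norm_integral_mul_le {φ : ℝ → ℝ} (hbc : b ≤ c) (hφ : ContinuousOn φ (Icc b c)) :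
    ∃ M, 0 ≤ M ∧ ∀ u : ℝ → ℝ, Continuous u →
      ‖∫ x in b..c, φ x * u x‖ ≤ M * ∫ x in b..c, ‖u x‖ := by
  obtain ⟨M, hM⟩ := isCompact_Icc.exists_bound_of_continuousOn hφ
  refine ⟨M, (norm_nonneg _).trans (hM b (left_mem_Icc.2 hbc)), fun u hu => ?_⟩
  rw [← intervalIntegral.integral_const_mul]
  refine intervalIntegral.norm_integral_le_of_norm_le hbc (.of_forall fun x hx => ?_)
    ((hu.norm.const_mul M).intervalIntegrable _ _)
  rw [norm_mul]
  gcongr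
  exact hM x (Ioc_subset_Icc_self hx)

-- Average against a bump `w` of mass one: integrating by parts moves all derivatives onto `w`,
-- and the average is a value of the function.
lemma exists_mem_Icc_norm_iteratedDeriv_add_const_mul_le (hbc : b < c) (a : ℝ) (j : ℕ) :
    ∃ M, 0 ≤ M ∧ ∀ u : ℝ → ℝ, ContDiff ℝ j u →
      ∃ y ∈ Icc b c, ‖iteratedDeriv j u y + a * u y‖ ≤ M * ∫ x in b..c, ‖u x‖ := by
  obtain ⟨w, hw, w_nonneg, w_int, w_supp⟩ :=
    exists_contDiff_nonneg_integral_eq_one_tsupport_subset_Ioo hbc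
  have hwj : ContDiff ℝ j w := contDiff_infty.1 hw j
  have hw_cont : Continuous w := hw.continuous
  have : Continuous (iteratedDeriv j w) := hwj.continuous_iteratedDeriv' j
  obtain ⟨M, hM, hM_le⟩ := exists_norm_integral_mul_le hbc.le
    (φ := fun x => (-1) ^ j * iteratedDeriv j w x + a * w x) (Continuous.continuousOn (by fun_prop))
  refine ⟨M, hM, fun u hu => ?_⟩
  have hu_cont : Continuous u := hu.continuous
  have : Continuous (iteratedDeriv j u) := hu.continuous_iteratedDeriv' j
  obtain ⟨y, hy, mean_eq⟩ := exists_eq_const_mul_intervalIntegral_of_nonneg (μ := volume)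
    (f := fun x => iteratedDeriv j u x + a * u x) (a := b) (b := c)
    (Continuous.continuousOn (by fun_prop)) (hw_cont.intervalIntegrable _ _) fun x _ => w_nonneg x
  rw [uIcc_of_le hbc.le] at hy
  have adjoint : ∫ x in b..c, (iteratedDeriv j u x + a * u x) * w x =
      ∫ x in b..c, ((-1) ^ j * iteratedDeriv j w x + a * w x) * u x := by
    have hint : ∀ {v : ℝ → ℝ}, Continuous v → IntervalIntegrable v volume b c :=
      fun hv => hv.intervalIntegrable _ _
    calc ∫ x in b..c, (iteratedDeriv j u x + a * u x) * w x
        = (∫ x in b..c, w x * iteratedDeriv j u x) + ∫ x in b..c, a * (w x * u x) := by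
          rw [← intervalIntegral.integral_add (hint (by fun_prop)) (hint (by fun_prop))]
          congr! 2
          ring
      _ = (∫ x in b..c, (-1) ^ j * (iteratedDeriv j w x * u x)) +
            ∫ x in b..c, a * (w x * u x) := by
          rw [integral_mul_iteratedDeriv_eq j hwj w_supp hu,
            ← intervalIntegral.integral_const_mul]
      _ = ∫ x in b..c, ((-1) ^ j * iteratedDeriv j w x + a * w x) * u x := by
          rw [← intervalIntegral.integral_add (hint (by fun_prop)) (hint (by fun_prop))]
          congr! 2
          ring
  refine ⟨y, hy, ?_⟩
  rw [w_int, mul_one] at mean_eq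
  rw [← mean_eq, adjoint]
  exact hM_le u hu_cont

lemma exists_norm_iteratedDeriv_add_const_mul_le (hbc : b < c) (a : ℝ) (j : ℕ) :
    ∃ M, 0 ≤ M ∧ ∀ u : ℝ → ℝ, ContDiff ℝ (j + 1 : ℕ) u → ∀ x ∈ Icc b c,
      ‖iteratedDeriv j u x + a * u x‖ ≤
        M * (∫ t in b..c, ‖u t‖) +
          ∫ t in b..c, ‖iteratedDeriv (j + 1) u t + a * deriv u t‖ := by
  obtain ⟨M, hM, hM_le⟩ := exists_mem_Icc_norm_iteratedDeriv_add_const_mul_le hbc a j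
  refine ⟨M, hM, fun u hu x hx => ?_⟩
  set h := fun x => iteratedDeriv j u x + a * u x with h_def
  have hu₁ : ContDiff ℝ 1 u := hu.of_le (mod_cast j.succ_pos)
  have hh : ContDiff ℝ 1 h := by
    have := contDiff_iteratedDeriv (m := 1) (n := j) (by rwa [add_comm])
    fun_prop
  have deriv_h : deriv h = fun t => iteratedDeriv (j + 1) u t + a * deriv u t := by
    ext t
    rw [h_def, deriv_fun_add (hu.differentiable_iteratedDeriv' j t)
      ((hu₁.differentiable one_ne_zero t).const_mul a), deriv_const_mul_field, iteratedDeriv_succ]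
  obtain ⟨y, hy, hy_le⟩ := hM_le u hu.of_succ
  calc ‖h x‖ ≤ ‖h y‖ + ‖h x - h y‖ := norm_le_norm_add_norm_sub' _ _
    _ ≤ M * (∫ t in b..c, ‖u t‖) + ∫ t in b..c, ‖deriv h t‖ :=
        add_le_add hy_le (norm_sub_le_integral_norm_deriv hh hx hy)
    _ = _ := by rw [deriv_h]

end Calculus

section LpNorm

section ConstSMul

variable {α 𝕜 E : Type*} [MeasurableSpace α] {μ : Measure α} [NormedField 𝕜]
  [NormedAddCommGroup E] [NormedSpace 𝕜 E] {f g : α → E} {p : ℝ≥0∞}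

lemma eLpNorm_add_const_smul_le (hf : AEStronglyMeasurable f μ) (hg : AEStronglyMeasurable g μ)
    (hp : 1 ≤ p) (r : 𝕜) :
    eLpNorm (fun x => f x + r • g x) p μ ≤ eLpNorm f p μ + ‖r‖ₑ * eLpNorm g p μ :=
  (eLpNorm_add_le hf (hg.const_smul r) hp).trans_eq
    (congrArg _ (eLpNorm_const_smul r g p μ))

lemma eLpNorm_le_add_const_smul (hf : AEStronglyMeasurable f μ) (hg : AEStronglyMeasurable g μ)
    (hp : 1 ≤ p) (r : 𝕜) :
    eLpNorm f p μ ≤ eLpNorm (fun x => f x + r • g x) p μ + ‖r‖ₑ * eLpNorm g p μ := by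
  simpa only [add_assoc, ← add_smul, add_neg_cancel, zero_smul, add_zero, enorm_neg] using
    eLpNorm_add_const_smul_le (f := fun x => f x + r • g x) (hf.add (hg.const_smul r)) hg hp (-r)

end ConstSMul

variable {b c : ℝ}

lemma ofReal_intervalIntegral_norm_eq_eLpNorm_one {E : Type*} [NormedAddCommGroup E] {u : ℝ → E}
    (hbc : b ≤ c) (hu : IntervalIntegrable u volume b c) :
    ENNReal.ofReal (∫ x in b..c, ‖u x‖) = eLpNorm u 1 (volume.restrict (Ioo b c)) := by
  rw [intervalIntegral.integral_of_le hbc, integral_Ioc_eq_integral_Ioo,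
    eLpNorm_one_eq_lintegral_enorm, ofReal_integral_norm_eq_lintegral_enorm]
  exact (intervalIntegrable_iff_integrableOn_Ioo_of_le hbc).1 hu

lemma exists_eLpNorm_iteratedDeriv_add_const_mul_le (hbc : b < c) (a : ℝ) (j : ℕ) {p : ℝ≥0∞}
    (hp : 1 ≤ p) :
    ∃ C ≠ ∞, ∀ u : ℝ → ℝ, ContDiff ℝ (j + 1 : ℕ) u →
      eLpNorm (fun x => iteratedDeriv j u x + a * u x) p (volume.restrict (Ioo b c)) ≤
        C * (eLpNorm u p (volume.restrict (Ioo b c)) +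
          eLpNorm (fun x => iteratedDeriv (j + 1) u x + a * deriv u x) p
            (volume.restrict (Ioo b c))) := by
  obtain ⟨M, hM, hM_le⟩ := exists_norm_iteratedDeriv_add_const_mul_le hbc a j
  set μ := volume.restrict (Ioo b c) with μ_def
  have μ_ne_zero : μ univ ≠ 0 := by simp [μ_def, hbc]
  set A := μ univ ^ p.toReal⁻¹
  set B := μ univ ^ (1 - 1 / p.toReal)
  have hA : A ≠ ∞ := ENNReal.rpow_ne_top_of_ne_zero μ_ne_zero (measure_ne_top _ _)
  have hB : B ≠ ∞ := ENNReal.rpow_ne_top_of_ne_zero μ_ne_zero (measure_ne_top _ _)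
  have L1_le_Lp {v : ℝ → ℝ} (hv : Continuous v) :
      ENNReal.ofReal (∫ t in b..c, ‖v t‖) ≤ eLpNorm v p μ * B := by
    rw [ofReal_intervalIntegral_norm_eq_eLpNorm_one hbc.le (hv.intervalIntegrable _ _)]
    simpa only [ENNReal.toReal_one, div_one] using
      eLpNorm_le_eLpNorm_mul_rpow_measure_univ hp hv.aestronglyMeasurable
  refine ⟨A * ((ENNReal.ofReal M + 1) * B), by finiteness, fun u hu => ?_⟩
  set h' := fun x => iteratedDeriv (j + 1) u x + a * deriv u x
  have hh' : Continuous h' := (hu.continuous_iteratedDeriv' (j + 1)).add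
    ((hu.continuous_deriv (mod_cast j.succ_pos)).const_mul a)
  calc eLpNorm (fun x => iteratedDeriv j u x + a * u x) p μ
      ≤ A * ENNReal.ofReal (M * (∫ t in b..c, ‖u t‖) + ∫ t in b..c, ‖h' t‖) :=
        eLpNorm_le_of_ae_bound <| (ae_restrict_mem measurableSet_Ioo).mono fun x hx =>
          hM_le u hu x (Ioo_subset_Icc_self hx)
    _ ≤ A * (ENNReal.ofReal M * (eLpNorm u p μ * B) + eLpNorm h' p μ * B) := by
        grw [ENNReal.ofReal_add_le, ENNReal.ofReal_mul hM, L1_le_Lp hu.continuous, L1_le_Lp hh']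
    _ ≤ A * (ENNReal.ofReal M * (eLpNorm u p μ * B) + eLpNorm h' p μ * B) +
          A * B * (eLpNorm u p μ + ENNReal.ofReal M * eLpNorm h' p μ) := le_self_add
    _ = A * ((ENNReal.ofReal M + 1) * B) * (eLpNorm u p μ + eLpNorm h' p μ) := by ring

-- The antiderivative `u'' + a u` of `P u` is controlled first; it then gives `u''`, and hence `u'`.
lemma exists_sum_eLpNorm_iteratedDeriv_le (hbc : b < c) (a : ℝ) {p : ℝ≥0∞} (hp : 1 ≤ p) :
    ∃ C ≠ ∞, ∀ u : ℝ → ℝ, ContDiff ℝ 3 u →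
      ∑ i ∈ Finset.range 4, eLpNorm (iteratedDeriv i u) p (volume.restrict (Ioo b c)) ≤
        C * (eLpNorm u p (volume.restrict (Ioo b c)) +
          eLpNorm (Pop a u) p (volume.restrict (Ioo b c))) := by
  obtain ⟨C₁, hC₁, le_first⟩ := exists_eLpNorm_iteratedDeriv_add_const_mul_le hbc 0 1 hp
  obtain ⟨C₂, hC₂, le_antideriv⟩ := exists_eLpNorm_iteratedDeriv_add_const_mul_le hbc a 2 hp
  set μ := volume.restrict (Ioo b c)
  set D₂ := C₂ + ‖a‖ₑ
  set D₁ := C₁ * (1 + D₂)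
  set D₃ := 1 + ‖a‖ₑ * D₁
  refine ⟨1 + D₁ + D₂ + D₃, by finiteness, fun u hu => ?_⟩
  set N := eLpNorm u p μ + eLpNorm (Pop a u) p μ
  have meas {i : ℕ} (hi : i ≤ 3) : AEStronglyMeasurable (iteratedDeriv i u) μ :=
    (hu.continuous_iteratedDeriv i (mod_cast hi)).aestronglyMeasurable
  have bound_zero : eLpNorm u p μ ≤ N := le_self_add
  have bound_two : eLpNorm (iteratedDeriv 2 u) p μ ≤ D₂ * N := by
    calc eLpNorm (iteratedDeriv 2 u) p μ
        ≤ eLpNorm (fun x => iteratedDeriv 2 u x + a * u x) p μ + ‖a‖ₑ * eLpNorm u p μ :=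
          eLpNorm_le_add_const_smul (meas (by norm_num)) hu.continuous.aestronglyMeasurable hp a
      _ ≤ C₂ * N + ‖a‖ₑ * N := add_le_add (le_antideriv u hu) (by gcongr)
      _ = D₂ * N := (add_mul ..).symm
  have bound_one : eLpNorm (iteratedDeriv 1 u) p μ ≤ D₁ * N := by
    have := le_first u (hu.of_le (by norm_num))
    simp only [zero_mul, add_zero] at this
    grw [this, bound_two, bound_zero]
    exact (by ring : C₁ * (N + D₂ * N) = D₁ * N).le
  have bound_three : eLpNorm (iteratedDeriv 3 u) p μ ≤ D₃ * N := by
    calc eLpNorm (iteratedDeriv 3 u) p μ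
        ≤ eLpNorm (Pop a u) p μ + ‖a‖ₑ * eLpNorm (deriv u) p μ :=
          eLpNorm_le_add_const_smul (meas le_rfl)
            (hu.continuous_deriv (by norm_num)).aestronglyMeasurable hp a
      _ ≤ N + ‖a‖ₑ * (D₁ * N) := by
          rw [← iteratedDeriv_one]
          gcongr
          exact le_add_self
      _ = D₃ * N := by ring
  simp only [Finset.sum_range_succ, Finset.range_zero, Finset.sum_empty, zero_add,
    iteratedDeriv_zero]
  grw [bound_zero, bound_one, bound_two, bound_three]
  exact (by ring : N + D₁ * N + D₂ * N + D₃ * N = (1 + D₁ + D₂ + D₃) * N).le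

end LpNorm

section Pop

variable {a : ℝ} {k : ℕ} {f : ℝ → ℝ}

lemma contDiff_Pop (hf : ContDiff ℝ (k + 3 : ℕ) f) : ContDiff ℝ k (Pop a f) := by
  have h₁ : ContDiff ℝ k (deriv f) := (hf.of_le (mod_cast (by lia : k + 1 ≤ k + 3))).deriv'
  exact (contDiff_iteratedDeriv hf).add (contDiff_const.mul h₁)

lemma iteratedDeriv_Pop (hf : ContDiff ℝ (k + 3 : ℕ) f) :
    iteratedDeriv k (Pop a f) = Pop a (iteratedDeriv k f) := by
  have h₁ : ContDiff ℝ k (deriv f) := (hf.of_le (mod_cast (by lia : k + 1 ≤ k + 3))).deriv'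
  ext x
  calc iteratedDeriv k (Pop a f) x
      = iteratedDeriv k (iteratedDeriv 3 f) x + a * iteratedDeriv k (deriv f) x := by
        unfold Pop
        rw [iteratedDeriv_fun_add (contDiff_iteratedDeriv hf).contDiffAt
          (contDiff_const.mul h₁).contDiffAt, iteratedDeriv_const_mul_field]
    _ = Pop a (iteratedDeriv k f) x := by
        simp only [Pop, iteratedDeriv_iteratedDeriv, ← iteratedDeriv_succ, ← iteratedDeriv_succ',
          add_comm 3 k]

end Pop

section SobNorm

variable {p : ℝ≥0∞} {k : ℕ} {f : ℝ → ℝ}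

lemma sobNorm_zero_right (p : ℝ≥0∞) (f : ℝ → ℝ) :
    sobNorm p 0 f = eLpNorm f p (volume.restrict (Ioo (-1) 0)) := by
  simp [sobNorm]

lemma sobNorm_mono {l : ℕ} (hkl : k ≤ l) : sobNorm p k f ≤ sobNorm p l f :=
  Finset.sum_le_sum_of_subset (Finset.range_subset_range.2 (by lia))

lemma eLpNorm_iteratedDeriv_le_sobNorm :
    eLpNorm (iteratedDeriv k f) p (volume.restrict (Ioo (-1) 0)) ≤ sobNorm p k f := by
  rw [sobNorm, Finset.sum_range_succ]
  exact le_add_self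

lemma sum_eLpNorm_iteratedDeriv_add_le_sobNorm (l : ℕ) :
    ∑ i ∈ Finset.range (k + 1), eLpNorm (iteratedDeriv (i + l) f) p (volume.restrict (Ioo (-1) 0))
      ≤ sobNorm p (k + l) f := by
  rw [sobNorm, show k + l + 1 = l + (k + 1) by ring, Finset.sum_range_add _ l]
  simp only [add_comm l]
  exact le_add_self

lemma sobNorm_add_le (k l : ℕ) :
    sobNorm p (k + l) f ≤ sobNorm p k f + sobNorm p l (iteratedDeriv k f) := by
  rw [sobNorm, add_assoc, Finset.sum_range_add]
  refine add_le_add (Finset.sum_le_sum_of_subset (Finset.range_subset_range.2 k.le_succ)) ?_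
  simp only [sobNorm, iteratedDeriv_iteratedDeriv, add_comm k, le_rfl]

lemma sobNorm_Pop_le (hp : 1 ≤ p) (a : ℝ) (hf : ContDiff ℝ (k + 3 : ℕ) f) :
    sobNorm p k (Pop a f) ≤ (1 + ‖a‖ₑ) * sobNorm p (k + 3) f := by
  set μ := volume.restrict (Ioo (-1 : ℝ) 0)
  have meas {i : ℕ} (hi : i ≤ k + 3) : AEStronglyMeasurable (iteratedDeriv i f) μ :=
    (hf.continuous_iteratedDeriv i (mod_cast hi)).aestronglyMeasurable
  have term_le {i : ℕ} (hi : i ≤ k) : eLpNorm (iteratedDeriv i (Pop a f)) p μ ≤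
      eLpNorm (iteratedDeriv (i + 3) f) p μ + ‖a‖ₑ * eLpNorm (iteratedDeriv (i + 1) f) p μ := by
    rw [iteratedDeriv_Pop (hf.of_le (mod_cast (by lia : i + 3 ≤ k + 3)))]
    unfold Pop
    simp only [iteratedDeriv_iteratedDeriv, ← iteratedDeriv_succ, add_comm 3 i]
    exact eLpNorm_add_const_smul_le (meas (by lia : i + 3 ≤ k + 3))
      (meas (by lia : i + 1 ≤ k + 3)) hp a
  calc sobNorm p k (Pop a f)
      ≤ ∑ i ∈ Finset.range (k + 1), (eLpNorm (iteratedDeriv (i + 3) f) p μ +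
          ‖a‖ₑ * eLpNorm (iteratedDeriv (i + 1) f) p μ) :=
        Finset.sum_le_sum fun i hi => term_le (Nat.lt_succ_iff.1 (Finset.mem_range.1 hi))
    _ ≤ sobNorm p (k + 3) f + ‖a‖ₑ * sobNorm p (k + 1) f := by
        rw [Finset.sum_add_distrib, ← Finset.mul_sum]
        grw [sum_eLpNorm_iteratedDeriv_add_le_sobNorm, sum_eLpNorm_iteratedDeriv_add_le_sobNorm]
    _ ≤ (1 + ‖a‖ₑ) * sobNorm p (k + 3) f := by
        grw [sobNorm_mono (by lia : k + 1 ≤ k + 3), add_mul, one_mul]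

lemma sobNorm_iterate_Pop_le (hp : 1 ≤ p) (a : ℝ) (i : ℕ) (hf : ContDiff ℝ (k + 3 * i : ℕ) f) :
    sobNorm p k ((Pop a)^[i] f) ≤ (1 + ‖a‖ₑ) ^ i * sobNorm p (k + 3 * i) f := by
  induction i generalizing f with
  | zero => simp
  | succ i ih =>
    calc sobNorm p k ((Pop a)^[i + 1] f)
        ≤ (1 + ‖a‖ₑ) ^ i * sobNorm p (k + 3 * i) (Pop a f) := ih (contDiff_Pop hf)
      _ ≤ (1 + ‖a‖ₑ) ^ i * ((1 + ‖a‖ₑ) * sobNorm p (k + 3 * (i + 1)) f) := by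
          gcongr
          exact sobNorm_Pop_le hp a hf
      _ = (1 + ‖a‖ₑ) ^ (i + 1) * sobNorm p (k + 3 * (i + 1)) f := by ring

lemma sum_eLpNorm_iterate_Pop_le (hp : 1 ≤ p) (a : ℝ) (n : ℕ) (hf : ContDiff ℝ (3 * n : ℕ) f) :
    ∑ i ∈ Finset.range (n + 1), eLpNorm ((Pop a)^[i] f) p (volume.restrict (Ioo (-1) 0)) ≤
      (∑ i ∈ Finset.range (n + 1), (1 + ‖a‖ₑ) ^ i) * sobNorm p (3 * n) f := by
  rw [Finset.sum_mul]
  refine Finset.sum_le_sum fun i hi => ?_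
  have hin : 0 + 3 * i ≤ 3 * n := by have := Finset.mem_range.1 hi; lia
  grw [← sobNorm_zero_right, sobNorm_iterate_Pop_le hp a i (hf.of_le (mod_cast hin)),
    sobNorm_mono hin]

lemma exists_sobNorm_add_three_le (hp : 1 ≤ p) (a : ℝ) :
    ∃ C ≠ ∞, ∀ (k : ℕ) (f : ℝ → ℝ), ContDiff ℝ (k + 3 : ℕ) f →
      sobNorm p (k + 3) f ≤ C * (sobNorm p k f + sobNorm p k (Pop a f)) := by
  obtain ⟨C, hC, base⟩ := exists_sum_eLpNorm_iteratedDeriv_le (by norm_num : (-1 : ℝ) < 0) a hp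
  refine ⟨1 + C, by finiteness, fun k f hf => ?_⟩
  have top_le : sobNorm p 3 (iteratedDeriv k f) ≤ C * (sobNorm p k f + sobNorm p k (Pop a f)) := by
    grw [← eLpNorm_iteratedDeriv_le_sobNorm, ← eLpNorm_iteratedDeriv_le_sobNorm,
      iteratedDeriv_Pop hf]
    exact base _ (contDiff_iteratedDeriv (by rwa [add_comm]))
  calc sobNorm p (k + 3) f ≤ sobNorm p k f + sobNorm p 3 (iteratedDeriv k f) := sobNorm_add_le k 3
    _ ≤ (sobNorm p k f + sobNorm p k (Pop a f)) +
          C * (sobNorm p k f + sobNorm p k (Pop a f)) := add_le_add le_self_add top_le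
    _ = (1 + C) * (sobNorm p k f + sobNorm p k (Pop a f)) := by ring

lemma exists_sobNorm_le_pow_mul_sum (hp : 1 ≤ p) (a : ℝ) :
    ∃ C ≠ ∞, C ≠ 0 ∧ ∀ (n : ℕ) (f : ℝ → ℝ), ContDiff ℝ (3 * n : ℕ) f →
      sobNorm p (3 * n) f ≤ C ^ n * ∑ i ∈ Finset.range (n + 1),
        eLpNorm ((Pop a)^[i] f) p (volume.restrict (Ioo (-1) 0)) := by
  obtain ⟨C, hC, step⟩ := exists_sobNorm_add_three_le hp a
  refine ⟨1 + 2 * C, by finiteness, by positivity, fun n => ?_⟩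
  induction n with
  | zero => simp [sobNorm_zero_right]
  | succ n ih =>
    intro f hf
    set S := ∑ i ∈ Finset.range (n + 1 + 1),
      eLpNorm ((Pop a)^[i] f) p (volume.restrict (Ioo (-1) 0)) with S_def
    have le_f : sobNorm p (3 * n) f ≤ (1 + 2 * C) ^ n * S := by
      refine (ih f (hf.of_le (mod_cast (by lia)))).trans ?_
      rw [S_def, Finset.sum_range_succ _ (n + 1)]
      gcongr
      exact le_self_add
    have le_Pf : sobNorm p (3 * n) (Pop a f) ≤ (1 + 2 * C) ^ n * S := by
      refine (ih _ (contDiff_Pop hf)).trans ?_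
      rw [S_def, Finset.sum_range_succ' _ (n + 1)]
      gcongr
      exact le_self_add
    calc sobNorm p (3 * (n + 1)) f
        ≤ C * (sobNorm p (3 * n) f + sobNorm p (3 * n) (Pop a f)) := step (3 * n) f hf
      _ ≤ C * ((1 + 2 * C) ^ n * S + (1 + 2 * C) ^ n * S) := by gcongr
      _ = 2 * C * ((1 + 2 * C) ^ n * S) := by ring
      _ ≤ (1 + 2 * C) * ((1 + 2 * C) ^ n * S) := by gcongr; exact le_add_self
      _ = (1 + 2 * C) ^ (n + 1) * S := by ring

end SobNorm

lemma inv_mul_geom_sum_one_add_le_one {r : ℝ} (hr : 0 < r) (n : ℕ) :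
    (1 + 1 / r)⁻¹ * ((1 + r) ^ n)⁻¹ * ∑ i ∈ Finset.range (n + 1), (1 + r) ^ i ≤ 1 := by
  rw [geom_sum_eq (by linarith), add_sub_cancel_left, ← mul_inv, inv_mul_le_iff₀ (by positivity),
    mul_one, div_le_iff₀ hr]
  calc (1 + r) ^ (n + 1) - 1 ≤ (1 + r) ^ (n + 1) := by linarith
    _ = (1 + 1 / r) * (1 + r) ^ n * r := by field_simp; ring

theorem stmt6_general (a : ℝ) (ha : a ≠ 0) (p : ℝ≥0∞) (hp : 1 ≤ p) :
    ∃ K : ℝ, 0 < K ∧ ∀ n : ℕ, ∀ f : ℝ → ℝ, ContDiff ℝ (3 * n : ℕ) f →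
      ENNReal.ofReal ((1 + 1 / |a|)⁻¹ * ((1 + |a|) ^ n)⁻¹) *
          (∑ i ∈ Finset.range (n + 1),
            eLpNorm ((Pop a)^[i] f) p (volume.restrict (Ioo (-1 : ℝ) 0))) ≤
        sobNorm p (3 * n) f ∧
      sobNorm p (3 * n) f ≤ ENNReal.ofReal (K ^ n) *
          ∑ i ∈ Finset.range (n + 1),
            eLpNorm ((Pop a)^[i] f) p (volume.restrict (Ioo (-1 : ℝ) 0)) := by
  obtain ⟨C, hC, hC₀, upper⟩ := exists_sobNorm_le_pow_mul_sum hp a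
  refine ⟨C.toReal, ENNReal.toReal_pos hC₀ hC, fun n f hf => ⟨?_, ?_⟩⟩
  · have geom_sum_eq : ∑ i ∈ Finset.range (n + 1), (1 + ‖a‖ₑ) ^ i =
        ENNReal.ofReal (∑ i ∈ Finset.range (n + 1), (1 + |a|) ^ i) := by
      rw [ENNReal.ofReal_sum_of_nonneg fun i _ => by positivity]
      simp only [ENNReal.ofReal_pow (by positivity : 0 ≤ 1 + |a|),
        ENNReal.ofReal_add zero_le_one (abs_nonneg a), ENNReal.ofReal_one, Real.enorm_eq_ofReal_abs]
    grw [sum_eLpNorm_iterate_Pop_le hp a n hf, geom_sum_eq, ← mul_assoc,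
      ← ENNReal.ofReal_mul (by positivity), inv_mul_geom_sum_one_add_le_one (abs_pos.2 ha),
      ENNReal.ofReal_one, one_mul]
  · rw [ENNReal.ofReal_pow ENNReal.toReal_nonneg, ENNReal.ofReal_toReal hC]
    exact upper n f hf

/-- there exists `K = K(p,a) > 0` such that for all `n` and all
`f ∈ W^{3n,p}(-1,0)`:
`(1+1/a)⁻¹ (1+a)⁻ⁿ Σ_{i=0}^n ‖Pⁱ f‖_p ≤ ‖f‖_{3n,p} ≤ Kⁿ Σ_{i=0}^n ‖Pⁱ f‖_p`. -/
theorem stmt6 (a : ℝ) (ha : 0 < a) (p : ℝ≥0∞) (hp : 1 ≤ p) :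
    ∃ K : ℝ, 0 < K ∧ ∀ n : ℕ, ∀ f : ℝ → ℝ, ContDiff ℝ (⊤ : ℕ∞) f →
      ENNReal.ofReal ((1 + 1 / a)⁻¹ * ((1 + a) ^ n)⁻¹) *
          (∑ i ∈ Finset.range (n + 1),
            eLpNorm ((Pop a)^[i] f) p (volume.restrict (Set.Ioo (-1 : ℝ) 0))) ≤
        sobNorm p (3 * n) f ∧
      sobNorm p (3 * n) f ≤ ENNReal.ofReal (K ^ n) *
          ∑ i ∈ Finset.range (n + 1),
            eLpNorm ((Pop a)^[i] f) p (volume.restrict (Set.Ioo (-1 : ℝ) 0)) := by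
  obtain ⟨K, hK, bounds⟩ := stmt6_general a ha.ne' p hp
  rw [abs_of_pos ha] at bounds
  exact ⟨K, hK, fun n f hf => bounds n f (contDiff_infty.1 hf (3 * n))⟩
end

section
/- Let T > 0 and z ∈ C^∞([0,T]) satisfy |z^{(j)}(t)| ≤ M (3j)! / R^{3j} for all j ≥ 0 and t ∈ [0,T], where R > 1. Then the series y(x,t) = Σ_{i≥0} g_i(x) z^{(i)}(t) converges together with all its derivatives uniformly on [-1,0]×[0,T]; y is Gevrey of order 1 in x and 3 in t, and solves ∂ₜy + ∂ₓ³y + a∂ₓy = 0 with y(0,t) = ∂ₓy(0,t) = 0, ∂ₓ²y(0,t) = z(t). -/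
/-!
The series is an inner product: `y(x, t) = ⟪G x, U t⟫` in `ℓ²`, where `G x` has coordinates
`w_i g_i(x)` and `U t` has coordinates `z^{(i)}(t) / w_i`. Grönwall's inequality and the
differentiated equation give `|∂ₓˡ g_i| ≤ e^K K^l / (3 i + 2 - l)!` on `[-1, 0]` with `K = 1 + |a|`;
since `R > 1`, the weights `w_i` can be chosen so that the coordinates of all derivatives of `G` and
of `U` decay geometrically, with Gevrey constants of order `1` and `3` respectively. Uniform
second-order Taylor remainders then make `G` and `U` smooth curves in `ℓ²` on compact intervals, and
Borel's theorem for Banach-space-valued functions extends them smoothly to `ℝ`. Hence `y` is smooth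
and can be differentiated termwise, the Gevrey bound is the Cauchy–Schwarz inequality, and the
equation holds because the terms of `∂ₜ y` cancel those of `∂ₓ³ y + a ∂ₓ y` after a shift of index.
-/

open Set Filter Topology
open scoped ContDiff ENNReal Nat lp

section DerivTower

variable {E F : Type*} [NormedAddCommGroup E] [NormedSpace ℝ E]
  [NormedAddCommGroup F] [NormedSpace ℝ F]

/-- `V` is a tower of successive derivatives within `s`: each `V n` has derivative `V (n + 1)`
there. On a closed interval this encodes smoothness up to the boundary without choosing an
extension. -/
def IsDerivTower (V : ℕ → ℝ → E) (s : Set ℝ) : Prop :=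
  ∀ n, ∀ t ∈ s, HasDerivWithinAt (V n) (V (n + 1) t) s t

theorem hasDerivAt_iteratedDeriv_of_contDiff {f : ℝ → E} (hf : ContDiff ℝ ∞ f) (n : ℕ) (t : ℝ) :
    HasDerivAt (iteratedDeriv n f) (iteratedDeriv (n + 1) f t) t := by
  rw [iteratedDeriv_succ]
  exact (hf.differentiable_iteratedDeriv n (mod_cast ENat.natCast_lt_top n) t).hasDerivAt

theorem isDerivTower_iteratedDeriv {f : ℝ → E} (hf : ContDiff ℝ ∞ f) (s : Set ℝ) :
    IsDerivTower (fun n => iteratedDeriv n f) s := fun n t _ =>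
  (hasDerivAt_iteratedDeriv_of_contDiff hf n t).hasDerivWithinAt

namespace IsDerivTower

variable {V W : ℕ → ℝ → E} {s t : Set ℝ}

theorem congr (hV : IsDerivTower V s) (h : ∀ n, EqOn (W n) (V n) s) : IsDerivTower W s := by
  intro n x hx
  rw [h (n + 1) hx]
  exact (hV n x hx).congr (h n) (h n hx)

theorem union (hs : IsClosed s) (ht : IsClosed t) (hVs : IsDerivTower V s)
    (hVt : IsDerivTower V t) : IsDerivTower V (s ∪ t) := by
  have within {u : Set ℝ} (hu : IsClosed u) (hVu : IsDerivTower V u) (n : ℕ) (x : ℝ) :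
      HasDerivWithinAt (V n) (V (n + 1) x) u x := by
    by_cases hx : x ∈ u
    · exact hVu n x hx
    · exact HasFDerivWithinAt.of_notMem_closure (by rwa [hu.closure_eq])
  exact fun n x _ => (within hs hVs n x).union (within ht hVt n x)

theorem piecewise [∀ x, Decidable (x ∈ s)] (hs : IsClosed s) (ht : IsClosed t)
    (hV : IsDerivTower V s)
    (hW : IsDerivTower W t) (h : ∀ n, EqOn (V n) (W n) (s ∩ t)) :
    IsDerivTower (fun n => s.piecewise (V n) (W n)) (s ∪ t) := by
  refine .union hs ht (hV.congr fun n => piecewise_eqOn s (V n) (W n)) (hW.congr fun n x hx => ?_)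
  by_cases hxs : x ∈ s
  · rw [piecewise_eq_of_mem s _ _ hxs, h n ⟨hxs, hx⟩]
  · exact piecewise_eq_of_notMem s _ _ hxs

theorem iteratedDeriv_eq (hV : IsDerivTower V univ) (n : ℕ) : iteratedDeriv n (V 0) = V n := by
  induction n with
  | zero => exact iteratedDeriv_zero
  | succ n ih =>
    rw [iteratedDeriv_succ, ih]
    exact deriv_eq fun t => (hV n t (mem_univ t)).hasDerivAt univ_mem

theorem contDiff (hV : IsDerivTower V univ) : ContDiff ℝ ∞ (V 0) := by
  refine contDiff_of_differentiable_iteratedDeriv fun n _ => ?_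
  rw [hV.iteratedDeriv_eq]
  exact fun t => ((hV n t (mem_univ t)).hasDerivAt univ_mem).differentiableAt

theorem norm_taylor_remainder_le (hV : IsDerivTower V s) (hs : Convex ℝ s) {C : ℝ}
    (hC : ∀ r ∈ s, ‖V 2 r‖ ≤ C) {x y : ℝ} (hx : x ∈ s) (hy : y ∈ s) :
    ‖V 0 y - V 0 x - (y - x) • V 1 x‖ ≤ C * |y - x| ^ 2 := by
  have hC0 : 0 ≤ C := (norm_nonneg _).trans (hC x hx)
  have hsub : uIcc x y ⊆ s := hs.ordConnected.uIcc_subset hx hy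
  have hV1 : ∀ r ∈ uIcc x y, ‖V 1 r - V 1 x‖ ≤ C * |y - x| := fun r hr =>
    (hs.norm_image_sub_le_of_norm_hasDerivWithin_le (hV 1) hC hx (hsub hr)).trans <| by
      gcongr
      exact abs_sub_left_of_mem_uIcc hr
  have hderiv : ∀ r ∈ uIcc x y,
      HasDerivWithinAt (fun r => V 0 r - (r - x) • V 1 x) (V 1 r - V 1 x) (uIcc x y) r := by
    intro r hr
    have hlin : HasDerivWithinAt (fun r => (r - x) • V 1 x) (V 1 x) (uIcc x y) r := by
      simpa using (((hasDerivAt_id r).sub_const x).smul_const (V 1 x)).hasDerivWithinAt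
    exact ((hV 0 r (hsub hr)).mono hsub).sub hlin
  calc ‖V 0 y - V 0 x - (y - x) • V 1 x‖
      = ‖(V 0 y - (y - x) • V 1 x) - (V 0 x - (x - x) • V 1 x)‖ := by
        rw [sub_self, zero_smul, sub_zero, sub_right_comm]
    _ ≤ C * |y - x| * ‖y - x‖ := (convex_uIcc x y).norm_image_sub_le_of_norm_hasDerivWithin_le
        hderiv hV1 left_mem_uIcc right_mem_uIcc
    _ = C * |y - x| ^ 2 := by rw [Real.norm_eq_abs, sq, mul_assoc]

end IsDerivTower

theorem iteratedDeriv_clm_comp (L : E →L[ℝ] F) {f : ℝ → E} (hf : ContDiff ℝ ∞ f)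
    (n : ℕ) (t : ℝ) : iteratedDeriv n (fun t => L (f t)) t = L (iteratedDeriv n f t) := by
  have := L.iteratedFDeriv_comp_left (hf.contDiffAt (x := t)) (i := n) (mod_cast le_top)
  simp only [iteratedDeriv_eq_iteratedFDeriv]
  exact congrArg (fun A => A fun _ => 1) this

end DerivTower

section Borel

variable {E : Type*} [NormedAddCommGroup E] [NormedSpace ℝ E]

theorem exists_norm_iteratedDeriv_le {f : ℝ → E} (hf : ContDiff ℝ ∞ f)
    (hsupp : HasCompactSupport f) (n : ℕ) : ∃ C, ∀ t, ‖iteratedDeriv n f t‖ ≤ C := by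
  simp only [← norm_iteratedFDeriv_eq_norm_iteratedDeriv]
  exact (hsupp.iteratedFDeriv n).exists_bound_of_continuous
    (hf.continuous_iteratedFDeriv (mod_cast le_top))

theorem exists_hasCompactSupport_iteratedDeriv_eq_single (k : ℕ) (e : E) :
    ∃ f : ℝ → E, ContDiff ℝ ∞ f ∧ HasCompactSupport f ∧
      ∀ n, iteratedDeriv n f 0 = Pi.single (M := fun _ => E) k e n := by
  let χ : ContDiffBump (0 : ℝ) := ⟨1, 2, one_pos, one_lt_two⟩
  let v : E := (k.factorial : ℝ)⁻¹ • e
  have hpow : ContDiff ℝ ∞ fun t : ℝ => t ^ k := contDiff_id.pow k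
  refine ⟨fun t => χ t • t ^ k • v, χ.contDiff.smul (hpow.smul contDiff_const),
    χ.hasCompactSupport.smul_right, fun n => ?_⟩
  have hlocal : (fun t => χ t • t ^ k • v) =ᶠ[𝓝 0] fun t => t ^ k • v := by
    filter_upwards [χ.eventuallyEq_one] with t ht
    rw [ht, Pi.one_apply, one_smul]
  rw [hlocal.iteratedDeriv_eq,
    iteratedDeriv_smul_const (hpow.contDiffAt.of_le (mod_cast le_top)), iteratedDeriv_fun_pow_zero]
  obtain rfl | hnk := eq_or_ne n k
  · simp [v, smul_smul, Nat.factorial_ne_zero]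
  · simp [hnk]

/-- Compressing by a large factor `c` and dividing by `c ^ k` preserves the `k`-th derivative at
`0` and makes all lower derivatives uniformly small. -/
theorem exists_iteratedDeriv_eq_single_norm_le (k : ℕ) (e : E) {ε : ℝ} (hε : 0 < ε) :
    ∃ f : ℝ → E, ContDiff ℝ ∞ f ∧ HasCompactSupport f ∧
      (∀ n, iteratedDeriv n f 0 = Pi.single (M := fun _ => E) k e n) ∧
      ∀ n < k, ∀ t, ‖iteratedDeriv n f t‖ ≤ ε := by
  obtain ⟨θ, hθ, hsupp, hjet⟩ := exists_hasCompactSupport_iteratedDeriv_eq_single k e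
  choose C hC using exists_norm_iteratedDeriv_le hθ hsupp
  obtain ⟨c, hc1, hcC⟩ : ∃ c : ℝ, 1 ≤ c ∧ ∀ n < k, C n ≤ ε * c := by
    have hlarge : ∀ n ∈ Finset.range k, ∀ᶠ c : ℝ in atTop, C n ≤ ε * c := fun n _ =>
      (tendsto_id.const_mul_atTop hε).eventually_ge_atTop (C n)
    obtain ⟨c, hc⟩ := ((eventually_ge_atTop (1 : ℝ)).and
      ((Finset.eventually_all _).2 hlarge)).exists
    exact ⟨c, hc.1, fun n hn => hc.2 n (Finset.mem_range.2 hn)⟩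
  have hc0 : 0 < c := one_pos.trans_le hc1
  have hderiv (n : ℕ) (t : ℝ) : iteratedDeriv n (fun t => (c ^ k)⁻¹ • θ (c * t)) t =
      (c ^ k)⁻¹ • c ^ n • iteratedDeriv n θ (c * t) := by
    rw [iteratedDeriv_fun_const_smul_field,
      iteratedDeriv_comp_const_smul (hθ.of_le (mod_cast le_top))]
  refine ⟨fun t => (c ^ k)⁻¹ • θ (c * t),
    (hθ.comp (contDiff_const.mul contDiff_id)).const_smul _,
    (hsupp.comp_homeomorph (Homeomorph.mulLeft₀ c hc0.ne')).smul_left (f := fun _ => (c ^ k)⁻¹),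
    fun n => ?_, fun n hn t => ?_⟩
  · rw [hderiv, mul_zero, hjet]
    obtain rfl | hnk := eq_or_ne n k
    · rw [inv_smul_smul₀ (pow_pos hc0 n).ne']
    · simp [hnk]
  · rw [hderiv, norm_smul, norm_smul, norm_inv, norm_pow, norm_pow, Real.norm_of_nonneg hc0.le,
      inv_mul_le_iff₀ (by positivity)]
    calc c ^ n * ‖iteratedDeriv n θ (c * t)‖
        ≤ c ^ n * (ε * c) := by gcongr; exact (hC n _).trans (hcC n hn)
      _ = c ^ (n + 1) * ε := by ring
      _ ≤ c ^ k * ε := by gcongr; exact hn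

theorem exists_contDiff_iteratedDeriv_eq [CompleteSpace E] (e : ℕ → E) (c : ℝ) :
    ∃ f : ℝ → E, ContDiff ℝ ∞ f ∧ ∀ n, iteratedDeriv n f c = e n := by
  choose f hf hsupp hjet hsmall using fun k =>
    exists_iteratedDeriv_eq_single_norm_le k (e k) (ε := (1 / 2) ^ k) (by positivity)
  choose C hC using fun k n => exists_norm_iteratedDeriv_le (hf k) (hsupp k) n
  let v : ℕ → ℕ → ℝ := fun n k => if n < k then (1 / 2) ^ k else C k n
  have hv (n : ℕ) : Summable (v n) :=
    (summable_congr_atTop ((eventually_gt_atTop n).mono fun k hk => if_pos hk)).2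
      summable_geometric_two
  have hbound (n k : ℕ) (t : ℝ) (_ : (n : ℕ∞) ≤ ⊤) : ‖iteratedFDeriv ℝ n (f k) t‖ ≤ v n k := by
    rw [norm_iteratedFDeriv_eq_norm_iteratedDeriv]
    by_cases hnk : n < k
    · simpa only [v, if_pos hnk] using hsmall k n hnk t
    · simpa only [v, if_neg hnk] using hC k n t
  have hsmooth : ContDiff ℝ ∞ fun t => ∑' k, f k t := contDiff_tsum hf (fun n _ => hv n) hbound
  refine ⟨fun t => ∑' k, f k (t - c), hsmooth.comp (contDiff_id.sub contDiff_const), fun n => ?_⟩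
  have hsum : Summable fun k => iteratedFDeriv ℝ n (f k) 0 :=
    .of_norm_bounded (hv n) fun k => hbound n k 0 le_top
  calc iteratedDeriv n (fun t => ∑' k, f k (t - c)) c
      = iteratedDeriv n (fun t => ∑' k, f k t) 0 := by
        rw [iteratedDeriv_comp_sub_const n (fun t => ∑' k, f k t) c]
        simp only [sub_self]
    _ = ∑' k, iteratedDeriv n (f k) 0 := by
        rw [iteratedDeriv_eq_iteratedFDeriv,
          iteratedFDeriv_tsum_apply hf (fun n _ => hv n) hbound le_top,
          ContinuousMultilinearMap.tsum_eval hsum]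
        rfl
    _ = e n := by
        simp only [hjet]
        rw [tsum_eq_single n fun k hk => by simp [hk.symm], Pi.single_eq_same]

theorem IsDerivTower.exists_contDiff_extension [CompleteSpace E] {V : ℕ → ℝ → E} {α β : ℝ}
    (hαβ : α < β) (hV : IsDerivTower V (Icc α β)) :
    ∃ f : ℝ → E, ContDiff ℝ ∞ f ∧ ∀ n, EqOn (iteratedDeriv n f) (V n) (Icc α β) := by
  classical
  obtain ⟨f, hf, hfα⟩ := exists_contDiff_iteratedDeriv_eq (fun n => V n α) α
  obtain ⟨g, hg, hgβ⟩ := exists_contDiff_iteratedDeriv_eq (fun n => V n β) β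
  let W : ℕ → ℝ → E := fun n => (Icc α β).piecewise (V n) (iteratedDeriv n g)
  have hWV (n : ℕ) : EqOn (W n) (V n) (Icc α β) := piecewise_eqOn _ _ _
  have hW : IsDerivTower W (Ici α) := by
    rw [← Icc_union_Ici_eq_Ici hαβ.le]
    refine hV.piecewise isClosed_Icc isClosed_Ici (isDerivTower_iteratedDeriv hg _) ?_
    rintro n t ⟨ht, htβ⟩
    rw [ht.2.antisymm htβ, hgβ]
  let U : ℕ → ℝ → E := fun n => (Ici α).piecewise (W n) (iteratedDeriv n f)
  have hUV (n : ℕ) : EqOn (U n) (V n) (Icc α β) :=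
    ((piecewise_eqOn _ _ _).mono Icc_subset_Ici_self).trans (hWV n)
  have hU : IsDerivTower U univ := by
    rw [← Ici_union_Iic (a := α)]
    refine hW.piecewise isClosed_Ici isClosed_Iic (isDerivTower_iteratedDeriv hf _) ?_
    rintro n t ⟨hαt, htα⟩
    obtain rfl : t = α := le_antisymm htα hαt
    rw [hWV n (left_mem_Icc.2 hαβ.le), hfα]
  exact ⟨U 0, hU.contDiff, fun n => hU.iteratedDeriv_eq n ▸ hUV n⟩

end Borel

section lp

variable {ι : Type*} {E : ι → Type*} [∀ i, NormedAddCommGroup (E i)] {p : ℝ≥0∞} [Fact (1 ≤ p)]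
  {b : ι → ℝ}

theorem memℓp_of_norm_le_summable (hb : Summable b) {a : ∀ i, E i} (ha : ∀ i, ‖a i‖ ≤ b i) :
    Memℓp a p := by
  have h1 : Memℓp a 1 := memℓp_gen <| by
    simpa using Summable.of_nonneg_of_le (fun i => norm_nonneg (a i)) ha hb
  exact h1.of_exponent_ge Fact.out

theorem lp_norm_le_tsum (hp : p ≠ ⊤) (hb : Summable b) {a : lp E p} (ha : ∀ i, ‖a i‖ ≤ b i) :
    ‖a‖ ≤ ∑' i, b i := by
  classical
  rw [← (lp.hasSum_single hp a).tsum_eq]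
  refine tsum_of_norm_bounded hb.hasSum fun i => ?_
  rw [lp.norm_single (one_pos.trans_le Fact.out)]
  exact ha i

variable [∀ i, NormedSpace ℝ (E i)]

/-- The second-order Taylor remainders of the coordinates are dominated by a summable sequence
times `|y - x| ^ 2`, so coordinatewise derivatives are derivatives in `lp`. -/
theorem IsDerivTower.of_lp_coordinates (hp : p ≠ ⊤) {s : Set ℝ} (hs : Convex ℝ s)
    {V : ℕ → ℝ → lp E p} {A : ℕ → ℝ} (hb : Summable b)
    (hV : ∀ i, IsDerivTower (fun n t => V n t i) s)
    (hbound : ∀ n i, ∀ t ∈ s, ‖V n t i‖ ≤ A n * b i) : IsDerivTower V s := by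
  intro n x hx
  rw [hasDerivWithinAt_iff_isLittleO]
  have hquad : (fun y => V n y - V n x - (y - x) • V (n + 1) x) =O[𝓝[s] x]
      fun y => (y - x) ^ 2 := by
    refine .of_bound (A (n + 2) * ∑' i, b i) (eventually_mem_nhdsWithin.mono fun y hy => ?_)
    have htower (i : ι) : IsDerivTower (fun m t => V (n + m) t i) s := fun m => hV i (n + m)
    have hcoord (i : ι) : ‖(V n y - V n x - (y - x) • V (n + 1) x : lp E p) i‖ ≤
        A (n + 2) * |y - x| ^ 2 * b i :=
      ((htower i).norm_taylor_remainder_le hs (hbound (n + 2) i) hx hy).trans_eq (by ring)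
    calc _ ≤ ∑' i, A (n + 2) * |y - x| ^ 2 * b i := lp_norm_le_tsum hp (hb.mul_left _) hcoord
      _ = A (n + 2) * (∑' i, b i) * ‖(y - x) ^ 2‖ := by
        rw [tsum_mul_left, norm_pow, Real.norm_eq_abs]; ring
  have hsq : (fun y : ℝ => (y - x) ^ 2) =o[𝓝 x] fun y => y - x := by
    simpa using Asymptotics.isLittleO_pow_sub_sub x one_lt_two
  exact hquad.trans_isLittleO (hsq.mono nhdsWithin_le_nhds)

theorem exists_contDiff_lp_curve [∀ i, CompleteSpace (E i)] (hp : p ≠ ⊤) {α β : ℝ} (hαβ : α < β)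
    {u : ∀ i, ℕ → ℝ → E i} {A : ℕ → ℝ} (hb : Summable b)
    (hu : ∀ i, IsDerivTower (u i) (Icc α β))
    (hbound : ∀ n i, ∀ t ∈ Icc α β, ‖u i n t‖ ≤ A n * b i) :
    ∃ f : ℝ → lp E p, ContDiff ℝ ∞ f ∧ ∀ n, ∀ t ∈ Icc α β,
      (∀ i, iteratedDeriv n f t i = u i n t) ∧ ‖iteratedDeriv n f t‖ ≤ A n * ∑' i, b i := by
  classical
  let V : ℕ → ℝ → lp E p := fun n t =>
    if ht : t ∈ Icc α β then
      ⟨fun i => u i n t, memℓp_of_norm_le_summable (hb.mul_left (A n)) (hbound n · t ht)⟩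
    else 0
  have hVu (n i) {t : ℝ} (ht : t ∈ Icc α β) : V n t i = u i n t := by simp only [V, dif_pos ht]
  have hVbound (n i) : ∀ t ∈ Icc α β, ‖V n t i‖ ≤ A n * b i := fun t ht => by
    rw [hVu n i ht]; exact hbound n i t ht
  have hV : IsDerivTower V (Icc α β) := .of_lp_coordinates hp (convex_Icc α β) hb
    (fun i => (hu i).congr fun n t ht => hVu n i ht) hVbound
  obtain ⟨f, hf, hfV⟩ := hV.exists_contDiff_extension hαβ
  refine ⟨f, hf, fun n t ht => ⟨fun i => by rw [hfV n ht, hVu n i ht], ?_⟩⟩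
  rw [hfV n ht, ← tsum_mul_left]
  exact lp_norm_le_tsum hp (hb.mul_left _) (hVbound n · t ht)

end lp

section Gronwall

theorem norm_le_exp_mul_of_norm_deriv_right_le {E : Type*} [NormedAddCommGroup E]
    [NormedSpace ℝ E] {f f' : ℝ → E} {B B' : ℝ → ℝ} {a b K : ℝ} (hf : ContinuousOn f (Icc a b))
    (hf' : ∀ x ∈ Ico a b, HasDerivWithinAt f (f' x) (Ici x) x) (ha : ‖f a‖ ≤ B a)
    (hB : ∀ x, HasDerivAt B (B' x) x)
    (bound : ∀ x ∈ Ico a b, ‖f' x‖ ≤ K * ‖f x‖ + Real.exp (K * (x - a)) * B' x) :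
    ∀ x ∈ Icc a b, ‖f x‖ ≤ Real.exp (K * (x - a)) * B x := by
  have perturbed {ε : ℝ} (hε : 0 < ε) : ∀ x ∈ Icc a b,
      ‖f x‖ ≤ Real.exp (K * (x - a)) * (B x + ε * (x - a)) := by
    have hbarrier (x : ℝ) : HasDerivAt (fun x => Real.exp (K * (x - a)) * (B x + ε * (x - a)))
        (Real.exp (K * (x - a)) * (K * 1) * (B x + ε * (x - a)) +
          Real.exp (K * (x - a)) * (B' x + ε * 1)) x := by
      have hlin : HasDerivAt (fun x => x - a) 1 x := (hasDerivAt_id x).sub_const a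
      exact (hlin.const_mul K).exp.mul ((hB x).add (hlin.const_mul ε))
    refine image_norm_le_of_norm_deriv_right_lt_deriv_boundary hf hf' (by simpa using ha)
      hbarrier fun x hx hfx => (bound x hx).trans_lt ?_
    rw [hfx]
    have : 0 < Real.exp (K * (x - a)) * ε := by positivity
    linarith
  intro x hx
  have hlim : Tendsto (fun ε => Real.exp (K * (x - a)) * (B x + ε * (x - a))) (𝓝[>] 0)
      (𝓝 (Real.exp (K * (x - a)) * B x)) := by
    have hcont : Continuous fun ε => Real.exp (K * (x - a)) * (B x + ε * (x - a)) := by fun_prop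
    simpa using hcont.continuousWithinAt.tendsto (x := 0) (s := Ioi 0)
  exact ge_of_tendsto hlim (eventually_mem_nhdsWithin.mono fun ε hε => perturbed hε x hx)

theorem hasDerivAt_pow_div_factorial (n : ℕ) (x : ℝ) :
    HasDerivAt (fun x : ℝ => x ^ (n + 1) / (n + 1)!) (x ^ n / n !) x := by
  refine ((hasDerivAt_pow (n + 1) x).div_const _).congr_deriv ?_
  rw [Nat.factorial_succ, Nat.add_sub_cancel]
  push_cast
  field_simp

variable {f h k : ℝ → ℝ} {a b K : ℝ}

theorem hasDerivAt_iteratedDeriv_neg (hf : ContDiff ℝ ∞ f) (j : ℕ) (s : ℝ) :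
    HasDerivAt (fun s => iteratedDeriv j f (-s)) (-iteratedDeriv (j + 1) f (-s)) s := by
  simpa [Function.comp_def] using
    (hasDerivAt_iteratedDeriv_of_contDiff hf j (-s)).scomp s (hasDerivAt_neg s)

theorem abs_iteratedDeriv_neg_le_of_succ (hf : ContDiff ℝ ∞ f) (hK : 0 ≤ K) {j n : ℕ}
    (h0 : iteratedDeriv j f 0 = 0)
    (h : ∀ s ∈ Icc 0 b, |iteratedDeriv (j + 1) f (-s)| ≤ Real.exp (K * s) * (s ^ n / n !)) :
    ∀ s ∈ Icc 0 b, |iteratedDeriv j f (-s)| ≤ Real.exp (K * s) * (s ^ (n + 1) / (n + 1)!) := by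
  have hderiv := hasDerivAt_iteratedDeriv_neg hf j
  have key := norm_le_exp_mul_of_norm_deriv_right_le (a := 0) (b := b) (K := K)
    (fun s _ => (hderiv s).continuousAt.continuousWithinAt)
    (fun s _ => (hderiv s).hasDerivWithinAt) (by simp [h0]) (hasDerivAt_pow_div_factorial n) ?_
  · simpa only [Real.norm_eq_abs, sub_zero] using key
  intro s hs
  have := h s (Ico_subset_Icc_self hs)
  rw [norm_neg, sub_zero, Real.norm_eq_abs]
  exact this.trans (le_add_of_nonneg_left (by positivity))

theorem abs_iteratedDeriv_two_neg_le (hh : ContDiff ℝ ∞ h)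
    (hode : ∀ x ∈ Icc (-b) 0, iteratedDeriv 3 h x + a * iteratedDeriv 1 h x + k x = 0)
    (h1 : iteratedDeriv 1 h 0 = 0) {B B' : ℝ → ℝ} (h2 : |iteratedDeriv 2 h 0| ≤ B 0)
    (hB : ∀ s, HasDerivAt B (B' s) s)
    (hk : ∀ s ∈ Icc 0 b, |k (-s)| ≤ Real.exp ((1 + |a|) * s) * B' s) :
    ∀ s ∈ Icc 0 b, |iteratedDeriv 2 h (-s)| ≤ Real.exp ((1 + |a|) * s) * B s := by
  let Y : ℝ → ℝ × ℝ := fun s => (iteratedDeriv 1 h (-s), iteratedDeriv 2 h (-s))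
  let Y' : ℝ → ℝ × ℝ := fun s => (-iteratedDeriv 2 h (-s), -iteratedDeriv 3 h (-s))
  have hY (s : ℝ) : HasDerivAt Y (Y' s) s :=
    (hasDerivAt_iteratedDeriv_neg hh 1 s).prodMk (hasDerivAt_iteratedDeriv_neg hh 2 s)
  have hY' : ∀ s ∈ Ico 0 b,
      ‖Y' s‖ ≤ (1 + |a|) * ‖Y s‖ + Real.exp ((1 + |a|) * (s - 0)) * B' s := by
    intro s hs
    have hks := hk s (Ico_subset_Icc_self hs)
    have hY1 : |iteratedDeriv 1 h (-s)| ≤ ‖Y s‖ := norm_fst_le (Y s)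
    have hY2 : |iteratedDeriv 2 h (-s)| ≤ ‖Y s‖ := norm_snd_le (Y s)
    have haY : |a| * |iteratedDeriv 1 h (-s)| ≤ |a| * ‖Y s‖ := by gcongr
    have h3 : -iteratedDeriv 3 h (-s) = a * iteratedDeriv 1 h (-s) + k (-s) := by
      linarith [hode (-s) ⟨by linarith [hs.2], by linarith [hs.1]⟩]
    have h3le : |iteratedDeriv 3 h (-s)| ≤ |a| * |iteratedDeriv 1 h (-s)| + |k (-s)| := by
      rw [← abs_neg, h3, ← abs_mul]
      exact abs_add_le _ _
    rw [Prod.norm_def, sub_zero]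
    refine max_le ?_ ?_ <;> rw [norm_neg, Real.norm_eq_abs]
    · have : 0 ≤ |a| * ‖Y s‖ := by positivity
      linarith [(abs_nonneg (k (-s))).trans hks]
    · linarith [norm_nonneg (Y s)]
  have hY0 : ‖Y 0‖ ≤ B 0 := by
    rw [Prod.norm_def]
    refine max_le ?_ (by simpa only [Y, neg_zero, Real.norm_eq_abs] using h2)
    simpa only [Y, neg_zero, h1, norm_zero] using (abs_nonneg _).trans h2
  intro s hs
  have key := norm_le_exp_mul_of_norm_deriv_right_le
    (fun s _ => (hY s).continuousAt.continuousWithinAt)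
    (fun s _ => (hY s).hasDerivWithinAt) hY0 hB hY' s hs
  rw [sub_zero] at key
  exact (norm_snd_le (Y s)).trans key

end Gronwall

theorem eq_zero_of_hasDerivAt_of_eqOn_zero {E : Type*} [NormedAddCommGroup E] [NormedSpace ℝ E]
    {f : ℝ → E} {f' : E} {s : Set ℝ} {x : ℝ} (hs : UniqueDiffWithinAt ℝ s x)
    (hf : HasDerivAt f f' x) (h : EqOn f 0 s) (hx : x ∈ s) : f' = 0 :=
  hs.eq_deriv s hf.hasDerivWithinAt ((hasDerivWithinAt_const x s 0).congr h (h hx))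

theorem iteratedDeriv_third_order_ode {a : ℝ} {h k : ℝ → ℝ} {s : Set ℝ}
    (hs : UniqueDiffOn ℝ s) (hh : ContDiff ℝ ∞ h) (hk : ContDiff ℝ ∞ k)
    (hode : ∀ x ∈ s, iteratedDeriv 3 h x + a * iteratedDeriv 1 h x + k x = 0) (l : ℕ) :
    ∀ x ∈ s, iteratedDeriv (l + 3) h x + a * iteratedDeriv (l + 1) h x +
      iteratedDeriv l k x = 0 := by
  induction l with
  | zero => simpa using hode
  | succ l ih =>
    intro x hx
    have hderiv := hasDerivAt_iteratedDeriv_of_contDiff hh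
    rw [add_right_comm l 1 3]
    exact eq_zero_of_hasDerivAt_of_eqOn_zero (hs x hx) (((hderiv (l + 3) x).add
      ((hderiv (l + 1) x).const_mul a)).add (hasDerivAt_iteratedDeriv_of_contDiff hk l x)) ih hx

section Factorial

theorem factorial_mul_le_pow_mul_factorial_pow (k m : ℕ) :
    (k * m)! ≤ (k ^ k) ^ m * (m !) ^ k := by
  induction m with
  | zero => simp
  | succ m ih =>
    calc (k * (m + 1))! = (k * m)! * (k * m + 1).ascFactorial k := by
          rw [Nat.factorial_mul_ascFactorial, mul_add_one]
      _ ≤ ((k ^ k) ^ m * (m !) ^ k) * (k * m + k) ^ k := by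
          gcongr
          exact Nat.ascFactorial_le_pow_add (k * m) k
      _ = (k ^ k) ^ (m + 1) * ((m + 1)!) ^ k := by
          rw [Nat.factorial_succ, ← mul_add_one k m, mul_pow, mul_pow]; ring

theorem factorial_mul_pow_le {s : ℝ} (hs1 : 1 ≤ s) (hs2 : s ≤ 2) (n k : ℕ) :
    n ! * (s - 1) ^ k ≤ k ! * (n - k)! * s ^ n := by
  have hs0 : 0 ≤ s - 1 := sub_nonneg.2 hs1
  rcases le_or_gt k n with hkn | hnk
  · have hchoose : (s - 1) ^ k * n.choose k ≤ s ^ n := by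
      have hbinom := add_pow (s - 1) 1 n
      simp only [sub_add_cancel, one_pow, mul_one] at hbinom
      rw [hbinom]
      exact Finset.single_le_sum (f := fun m => (s - 1) ^ m * (n.choose m : ℝ))
        (fun m _ => by positivity) (Finset.mem_range_succ_iff.2 hkn)
    calc n ! * (s - 1) ^ k = k ! * (n - k)! * ((s - 1) ^ k * n.choose k) := by
          rw [← Nat.choose_mul_factorial_mul_factorial hkn]; push_cast; ring
      _ ≤ k ! * (n - k)! * s ^ n := by gcongr
  · have hpow : (s - 1) ^ k ≤ s ^ n :=
      (pow_le_one₀ hs0 (by linarith)).trans (one_le_pow₀ hs1)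
    rw [Nat.sub_eq_zero_of_le hnk.le, Nat.factorial_zero, Nat.cast_one, mul_one]
    gcongr

theorem exists_one_lt_pow_le {R : ℝ} (hR : 1 < R) (n : ℕ) : ∃ s : ℝ, 1 < s ∧ s ≤ 2 ∧ s ^ n ≤ R := by
  have hpow : Tendsto (fun s : ℝ => s ^ n) (𝓝[>] 1) (𝓝 1) := by
    simpa using (continuous_pow n).continuousWithinAt.tendsto (x := (1 : ℝ)) (s := Ioi 1)
  have hIoc : ∀ᶠ s : ℝ in 𝓝[>] 1, s ∈ Ioc 1 2 := Ioc_mem_nhdsGT one_lt_two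
  obtain ⟨s, ⟨hs1, hs2⟩, hsR⟩ := (hIoc.and (hpow.eventually_le_const hR)).exists
  exact ⟨s, hs1, hs2, hsR⟩

end Factorial

/-- The generating functions of `∂ₓ³ + a ∂ₓ` on `[-1, 0]`: `g 0` solves the homogeneous equation
with `g 0`, `(g 0)'`, `(g 0)''` equal to `0, 0, 1` at the origin, and
`(g (i + 1))''' + a (g (i + 1))' = -g i` with zero data. -/
structure IsGeneratingFamily (a : ℝ) (g : ℕ → ℝ → ℝ) : Prop where
  contDiff : ∀ i, ContDiff ℝ ∞ (g i)
  ode_zero : ∀ x ∈ Icc (-1 : ℝ) 0, deriv^[3] (g 0) x + a * deriv (g 0) x = 0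
  zero_apply_zero : g 0 0 = 0
  deriv_zero_apply_zero : deriv (g 0) 0 = 0
  deriv_two_zero_apply_zero : deriv^[2] (g 0) 0 = 1
  ode_succ : ∀ i : ℕ, ∀ x ∈ Icc (-1 : ℝ) 0,
    deriv^[3] (g (i + 1)) x + a * deriv (g (i + 1)) x = - g i x
  succ_apply_zero : ∀ i : ℕ, g (i + 1) 0 = 0
  deriv_succ_apply_zero : ∀ i : ℕ, deriv (g (i + 1)) 0 = 0
  deriv_two_succ_apply_zero : ∀ i : ℕ, deriv^[2] (g (i + 1)) 0 = 0

/-- The sequence `i ↦ g_{i-1}` with the convention `g_{-1} = 0`, under which the equations of all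
generating functions have the same form. -/
def predecessor (g : ℕ → ℝ → ℝ) : ℕ → ℝ → ℝ
  | 0 => 0
  | i + 1 => g i

namespace IsGeneratingFamily

variable {a : ℝ} {g : ℕ → ℝ → ℝ}

theorem contDiff_predecessor (hg : IsGeneratingFamily a g) :
    ∀ i, ContDiff ℝ ∞ (predecessor g i)
  | 0 => contDiff_const
  | i + 1 => hg.contDiff i

theorem ode (hg : IsGeneratingFamily a g) (i : ℕ) : ∀ x ∈ Icc (-1 : ℝ) 0,
    iteratedDeriv 3 (g i) x + a * iteratedDeriv 1 (g i) x + predecessor g i x = 0 := by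
  intro x hx
  rw [iteratedDeriv_eq_iterate, iteratedDeriv_one]
  cases i with
  | zero => simpa [predecessor] using hg.ode_zero x hx
  | succ i => rw [hg.ode_succ i x hx, predecessor, neg_add_cancel]

theorem apply_zero (hg : IsGeneratingFamily a g) : ∀ i, g i 0 = 0
  | 0 => hg.zero_apply_zero
  | i + 1 => hg.succ_apply_zero i

theorem iteratedDeriv_one_apply_zero (hg : IsGeneratingFamily a g) (i : ℕ) :
    iteratedDeriv 1 (g i) 0 = 0 := by
  rw [iteratedDeriv_one]
  cases i with
  | zero => exact hg.deriv_zero_apply_zero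
  | succ i => exact hg.deriv_succ_apply_zero i

theorem iteratedDeriv_two_apply_zero (hg : IsGeneratingFamily a g) (i : ℕ) :
    iteratedDeriv 2 (g i) 0 = if i = 0 then 1 else 0 := by
  rw [iteratedDeriv_eq_iterate]
  cases i with
  | zero => simpa using hg.deriv_two_zero_apply_zero
  | succ i => simpa using hg.deriv_two_succ_apply_zero i

theorem abs_iteratedDeriv_neg_le_of_two (hg : IsGeneratingFamily a g) {i : ℕ}
    (h2 : ∀ s ∈ Icc (0 : ℝ) 1, |iteratedDeriv 2 (g i) (-s)| ≤
      Real.exp ((1 + |a|) * s) * (s ^ (3 * i) / (3 * i)!)) {j : ℕ} (hj : j ≤ 2) :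
    ∀ s ∈ Icc (0 : ℝ) 1, |iteratedDeriv j (g i) (-s)| ≤
      Real.exp ((1 + |a|) * s) * (s ^ (3 * i + 2 - j) / (3 * i + 2 - j)!) := by
  have hK : 0 ≤ 1 + |a| := by positivity
  have h1 := abs_iteratedDeriv_neg_le_of_succ (hg.contDiff i) hK
    (hg.iteratedDeriv_one_apply_zero i) h2
  interval_cases j
  · exact abs_iteratedDeriv_neg_le_of_succ (hg.contDiff i) hK (hg.apply_zero i) h1
  · exact h1
  · exact h2

theorem abs_iteratedDeriv_neg_le (hg : IsGeneratingFamily a g) (i : ℕ) {j : ℕ} (hj : j ≤ 2) :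
    ∀ s ∈ Icc (0 : ℝ) 1, |iteratedDeriv j (g i) (-s)| ≤
      Real.exp ((1 + |a|) * s) * (s ^ (3 * i + 2 - j) / (3 * i + 2 - j)!) := by
  induction i generalizing j with
  | zero =>
    refine hg.abs_iteratedDeriv_neg_le_of_two ?_ hj
    simpa using abs_iteratedDeriv_two_neg_le (hg.contDiff 0) (hg.ode 0)
      (hg.iteratedDeriv_one_apply_zero 0) (by simp [hg.iteratedDeriv_two_apply_zero])
      (fun s => hasDerivAt_const s (1 : ℝ)) (by simp [predecessor])
  | succ i ih =>
    refine hg.abs_iteratedDeriv_neg_le_of_two ?_ hj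
    exact abs_iteratedDeriv_two_neg_le (hg.contDiff (i + 1)) (hg.ode (i + 1))
      (hg.iteratedDeriv_one_apply_zero (i + 1)) (by simp [hg.iteratedDeriv_two_apply_zero])
      (hasDerivAt_pow_div_factorial (3 * i + 2)) (ih zero_le_two)

theorem abs_iteratedDeriv_le_of_le_two (hg : IsGeneratingFamily a g) {l : ℕ} (hl : l ≤ 2) (i : ℕ)
    {x : ℝ} (hx : x ∈ Icc (-1 : ℝ) 0) :
    |iteratedDeriv l (g i) x| ≤ Real.exp (1 + |a|) * (1 + |a|) ^ l / (3 * i + 2 - l)! := by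
  have hx0 : 0 ≤ -x := neg_nonneg.2 hx.2
  have hx1 : -x ≤ 1 := neg_le.1 hx.1
  have hpow : (-x) ^ (3 * i + 2 - l) ≤ (1 + |a|) ^ l :=
    (pow_le_one₀ hx0 hx1).trans (one_le_pow₀ (le_add_of_nonneg_right (abs_nonneg a)))
  calc |iteratedDeriv l (g i) x|
      ≤ Real.exp ((1 + |a|) * -x) * ((-x) ^ (3 * i + 2 - l) / (3 * i + 2 - l)!) := by
        simpa using hg.abs_iteratedDeriv_neg_le i hl (-x) ⟨hx0, hx1⟩
    _ ≤ Real.exp ((1 + |a|) * 1) * ((1 + |a|) ^ l / (3 * i + 2 - l)!) := by gcongr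
    _ = Real.exp (1 + |a|) * (1 + |a|) ^ l / (3 * i + 2 - l)! := by rw [mul_one, mul_div_assoc]

theorem abs_iteratedDeriv_add_three_le (hg : IsGeneratingFamily a g) (l i : ℕ) {x : ℝ}
    (hx : x ∈ Icc (-1 : ℝ) 0) : |iteratedDeriv (l + 3) (g i) x| ≤
      |a| * |iteratedDeriv (l + 1) (g i) x| + |iteratedDeriv l (predecessor g i) x| := by
  have hode := iteratedDeriv_third_order_ode (uniqueDiffOn_Icc (by norm_num)) (hg.contDiff i)
    (hg.contDiff_predecessor i) (hg.ode i) l x hx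
  calc |iteratedDeriv (l + 3) (g i) x|
      = |a * iteratedDeriv (l + 1) (g i) x + iteratedDeriv l (predecessor g i) x| := by
        rw [← abs_neg]; congr 1; linarith
    _ ≤ |a| * |iteratedDeriv (l + 1) (g i) x| + |iteratedDeriv l (predecessor g i) x| := by
        rw [← abs_mul]; exact abs_add_le _ _

theorem abs_iteratedDeriv_le (hg : IsGeneratingFamily a g) (l i : ℕ) {x : ℝ}
    (hx : x ∈ Icc (-1 : ℝ) 0) :
    |iteratedDeriv l (g i) x| ≤ Real.exp (1 + |a|) * (1 + |a|) ^ l / (3 * i + 2 - l)! := by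
  induction l using Nat.strong_induction_on generalizing i with
  | _ l ih =>
  rcases le_or_gt l 2 with hl | hl
  · exact hg.abs_iteratedDeriv_le_of_le_two hl i hx
  obtain ⟨n, rfl⟩ := Nat.exists_eq_add_of_le' hl
  set K := 1 + |a| with hK
  have hprev : |iteratedDeriv n (predecessor g i) x| ≤
      Real.exp K * K ^ n / (3 * i + 2 - (n + 3))! := by
    cases i with
    | zero =>
      have hzero : iteratedDeriv n (predecessor g 0) x = 0 := by simp [predecessor, Pi.zero_def]
      rw [hzero, abs_zero]
      positivity
    | succ i =>
      rw [show 3 * (i + 1) + 2 - (n + 3) = 3 * i + 2 - n by lia]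
      exact ih n (by lia) i
  have hsame : |iteratedDeriv (n + 1) (g i) x| ≤
      Real.exp K * K ^ (n + 1) / (3 * i + 2 - (n + 3))! := by
    refine (ih (n + 1) (by lia) i).trans ?_
    gcongr
    lia
  have hcube : |a| * K + 1 ≤ K ^ 3 := by
    rw [hK]; nlinarith [abs_nonneg a, pow_nonneg (abs_nonneg a) 2, pow_nonneg (abs_nonneg a) 3]
  calc |iteratedDeriv (n + 3) (g i) x|
      ≤ |a| * |iteratedDeriv (n + 1) (g i) x| + |iteratedDeriv n (predecessor g i) x| :=
        hg.abs_iteratedDeriv_add_three_le n i hx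
    _ ≤ |a| * (Real.exp K * K ^ (n + 1) / (3 * i + 2 - (n + 3))!) +
          Real.exp K * K ^ n / (3 * i + 2 - (n + 3))! := by gcongr
    _ = Real.exp K * (K ^ n * (|a| * K + 1)) / (3 * i + 2 - (n + 3))! := by ring
    _ ≤ Real.exp K * (K ^ n * K ^ 3) / (3 * i + 2 - (n + 3))! := by gcongr
    _ = Real.exp K * K ^ (n + 3) / (3 * i + 2 - (n + 3))! := by rw [pow_add]

theorem add_add_mul_eq_zero_of_hasSum (hg : IsGeneratingFamily a g) {x : ℝ}
    (hx : x ∈ Icc (-1 : ℝ) 0) {c : ℕ → ℝ} {y₀ y₁ y₃ : ℝ}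
    (h0 : HasSum (fun i => g i x * c (i + 1)) y₀)
    (h1 : HasSum (fun i => iteratedDeriv 1 (g i) x * c i) y₁)
    (h3 : HasSum (fun i => iteratedDeriv 3 (g i) x * c i) y₃) : y₀ + y₃ + a * y₁ = 0 := by
  have hprev : HasSum (fun i => predecessor g i x * c i) y₀ := by
    have := (hasSum_nat_add_iff (f := fun i => predecessor g i x * c i) 1).1 h0
    simpa only [Finset.range_one, Finset.sum_singleton, predecessor, Pi.zero_apply, zero_mul,
      add_zero] using this
  have hzero : HasSum (fun _ : ℕ => (0 : ℝ)) (y₀ + y₃ + a * y₁) := by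
    refine ((hprev.add h3).add (h1.mul_left a)).congr_fun fun i => ?_
    linear_combination (-c i) * hg.ode i x hx
  exact hzero.unique hasSum_zero

theorem hasSum_iteratedDeriv_two_apply_zero (hg : IsGeneratingFamily a g) (c : ℕ → ℝ) :
    HasSum (fun i => iteratedDeriv 2 (g i) 0 * c i) (c 0) := by
  have := hasSum_single (f := fun i => iteratedDeriv 2 (g i) 0 * c i) 0 fun i hi => by
    rw [hg.iteratedDeriv_two_apply_zero, if_neg hi, zero_mul]
  rwa [hg.iteratedDeriv_two_apply_zero, if_pos rfl, one_mul] at this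

end IsGeneratingFamily

section Gevrey

/-- `f` is Gevrey of order `σ` on `s`: its `n`-th derivative is at most `C (n!)^σ / ρ^n` there. -/
def IsGevreyOn {E : Type*} [NormedAddCommGroup E] [NormedSpace ℝ E] (σ : ℕ) (f : ℝ → E)
    (s : Set ℝ) : Prop :=
  ∃ C ρ : ℝ, 0 < C ∧ 0 < ρ ∧ ∀ n, ∀ x ∈ s, ‖iteratedDeriv n f x‖ ≤ C * n ! ^ σ / ρ ^ n

theorem exists_isGevreyOn_lp_curve {ι : Type*} {E : ι → Type*} [∀ i, NormedAddCommGroup (E i)]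
    [∀ i, NormedSpace ℝ (E i)] [∀ i, CompleteSpace (E i)] {p : ℝ≥0∞} [Fact (1 ≤ p)] (hp : p ≠ ⊤)
    {α β : ℝ} (hαβ : α < β) {u : ∀ i, ℕ → ℝ → E i} {b : ι → ℝ} (hb : Summable b)
    (hu : ∀ i, IsDerivTower (u i) (Icc α β)) {σ : ℕ} {C ρ : ℝ} (hC : 0 < C) (hρ : 0 < ρ)
    (hbound : ∀ n i, ∀ t ∈ Icc α β, ‖u i n t‖ ≤ C * n ! ^ σ / ρ ^ n * b i) :
    ∃ f : ℝ → lp E p, ContDiff ℝ ∞ f ∧ IsGevreyOn σ f (Icc α β) ∧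
      ∀ n, ∀ t ∈ Icc α β, ∀ i, iteratedDeriv n f t i = u i n t := by
  obtain ⟨f, hf, hfu⟩ := exists_contDiff_lp_curve hp hαβ hb hu hbound
  have hb0 : 0 ≤ ∑' i, b i := tsum_nonneg fun i =>
    nonneg_of_mul_nonneg_right ((norm_nonneg _).trans (hbound 0 i α (left_mem_Icc.2 hαβ.le)))
      (by positivity)
  refine ⟨f, hf, ⟨C * (1 + ∑' i, b i), ρ, by positivity, hρ, fun n t ht => ?_⟩,
    fun n t ht => (hfu n t ht).1⟩
  calc ‖iteratedDeriv n f t‖ ≤ C * n ! ^ σ / ρ ^ n * ∑' i, b i := (hfu n t ht).2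
    _ ≤ C * n ! ^ σ / ρ ^ n * (1 + ∑' i, b i) := by gcongr; exact le_add_of_nonneg_left zero_le_one
    _ = C * (1 + ∑' i, b i) * n ! ^ σ / ρ ^ n := by ring

section Inner

variable {E : Type*} [NormedAddCommGroup E] [InnerProductSpace ℝ E] {G U : ℝ → E}

theorem iteratedDeriv_inner_right (v : E) (hU : ContDiff ℝ ∞ U) (m : ℕ) (t : ℝ) :
    iteratedDeriv m (fun t => inner ℝ v (U t)) t = inner ℝ v (iteratedDeriv m U t) :=
  iteratedDeriv_clm_comp (innerSL ℝ v) hU m t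

theorem iteratedDeriv_inner_left (hG : ContDiff ℝ ∞ G) (v : E) (l : ℕ) (x : ℝ) :
    iteratedDeriv l (fun x => inner ℝ (G x) v) x = inner ℝ (iteratedDeriv l G x) v := by
  simpa only [real_inner_comm] using iteratedDeriv_inner_right v hG l x

theorem IsGevreyOn.exists_abs_iteratedDeriv_inner_le {σ τ : ℕ} {s t : Set ℝ}
    (hGs : IsGevreyOn σ G s) (hUt : IsGevreyOn τ U t) (hG : ContDiff ℝ ∞ G)
    (hU : ContDiff ℝ ∞ U) :
    ∃ C R₁ R₂ : ℝ, 0 < C ∧ 0 < R₁ ∧ 0 < R₂ ∧ ∀ l m, ∀ x ∈ s, ∀ y ∈ t,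
      |iteratedDeriv l (fun x' => iteratedDeriv m (fun y' => inner ℝ (G x') (U y')) y) x| ≤
        C * l ! ^ σ * m ! ^ τ / (R₁ ^ l * R₂ ^ m) := by
  obtain ⟨C₁, R₁, hC₁, hR₁, hG'⟩ := hGs
  obtain ⟨C₂, R₂, hC₂, hR₂, hU'⟩ := hUt
  refine ⟨C₁ * C₂, R₁, R₂, mul_pos hC₁ hC₂, hR₁, hR₂, fun l m x hx y hy => ?_⟩
  simp only [iteratedDeriv_inner_right _ hU, iteratedDeriv_inner_left hG]
  calc |inner ℝ (iteratedDeriv l G x) (iteratedDeriv m U y)|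
      ≤ ‖iteratedDeriv l G x‖ * ‖iteratedDeriv m U y‖ := abs_real_inner_le_norm _ _
    _ ≤ (C₁ * l ! ^ σ / R₁ ^ l) * (C₂ * m ! ^ τ / R₂ ^ m) := by
      gcongr
      exacts [hG' l x hx, hU' m y hy]
    _ = C₁ * C₂ * l ! ^ σ * m ! ^ τ / (R₁ ^ l * R₂ ^ m) := by ring

theorem hasSum_mul_of_weighted {ι : Type*} {v w : ℓ²(ι, ℝ)} {p q r : ι → ℝ} (hr : ∀ i, r i ≠ 0)
    (hv : ∀ i, v i = p i * r i) (hw : ∀ i, w i = q i / r i) :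
    HasSum (fun i => p i * q i) (inner ℝ v w) := by
  refine (lp.hasSum_inner (𝕜 := ℝ) v w).congr_fun fun i => ?_
  rw [hv, hw, RCLike.inner_apply, conj_trivial]
  field_simp [hr i]

end Inner

end Gevrey

section WeightedCurves

/-- The weight multiplying `g_i` and dividing `z^{(i)}`. The factorial balances `g_i`, of size
`1 / (3 i)!`, against `z^{(i)}`, of size `(3 i)! s ^ (-12 i)`, and `s ^ (6 i)` splits the remaining
decay evenly; as differentiation costs at most a factor `s ^ (3 i)`, both weighted sequences and all
their derivatives decay like `s ^ (-3 i)`. -/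
noncomputable def weight (s : ℝ) (i : ℕ) : ℝ := (3 * i)! / s ^ (6 * i)

theorem weight_pos {s : ℝ} (hs : 0 < s) (i : ℕ) : 0 < weight s i := by
  unfold weight
  positivity

theorem summable_inv_cube_pow {s : ℝ} (hs : 1 < s) : Summable fun i : ℕ => (s ^ 3)⁻¹ ^ i :=
  summable_geometric_of_lt_one (by positivity) <|
    inv_lt_one_of_one_lt₀ (one_lt_pow₀ hs three_ne_zero)

theorem abs_div_weight_le {c : ℕ → ℝ} {M R s : ℝ} (hM : 0 ≤ M) (hs1 : 1 < s) (hs2 : s ≤ 2)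
    (hsR : s ^ 4 ≤ R) (hc : ∀ j, |c j| ≤ M * (3 * j)! / R ^ (3 * j)) (m i : ℕ) :
    |c (i + m) / weight s i| ≤ M * m ! ^ 3 / ((s - 1) ^ 3 / 27) ^ m * (s ^ 3)⁻¹ ^ i := by
  have hs0 : 0 < s := one_pos.trans hs1
  have hs : 0 < s - 1 := sub_pos.2 hs1
  have hw := weight_pos hs0 i
  have hpow : s ^ (12 * i + 3 * m) ≤ R ^ (3 * (i + m)) :=
    calc s ^ (12 * i + 3 * m) ≤ s ^ (4 * (3 * (i + m))) := pow_le_pow_right₀ hs1.le (by lia)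
      _ = (s ^ 4) ^ (3 * (i + m)) := pow_mul s 4 _
      _ ≤ R ^ (3 * (i + m)) := by gcongr
  have hfact := factorial_mul_pow_le hs1.le hs2 (3 * (i + m)) (3 * m)
  rw [show 3 * (i + m) - 3 * m = 3 * i by lia] at hfact
  have hcube : ((3 * m)! : ℝ) ≤ 27 ^ m * m ! ^ 3 :=
    mod_cast factorial_mul_le_pow_mul_factorial_pow 3 m
  rw [abs_div, abs_of_pos hw]
  calc |c (i + m)| / weight s i
      ≤ (M * (3 * (i + m))! / s ^ (12 * i + 3 * m)) / weight s i := by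
        gcongr
        exact (hc (i + m)).trans (by gcongr)
    _ = M * ((3 * (i + m))! * (s - 1) ^ (3 * m)) * s ^ (6 * i) /
          (s ^ (12 * i + 3 * m) * (3 * i)! * (s - 1) ^ (3 * m)) := by
        unfold weight; field_simp
    _ ≤ M * ((3 * m)! * (3 * i)! * s ^ (3 * (i + m))) * s ^ (6 * i) /
          (s ^ (12 * i + 3 * m) * (3 * i)! * (s - 1) ^ (3 * m)) := by gcongr
    _ = M * (3 * m)! / (s - 1) ^ (3 * m) * (s ^ 3)⁻¹ ^ i := by
        rw [inv_pow, ← pow_mul, show 12 * i + 3 * m = 3 * (i + m) + 6 * i + 3 * i by ring,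
          pow_add, pow_add]
        field_simp
    _ ≤ M * (27 ^ m * m ! ^ 3) / (s - 1) ^ (3 * m) * (s ^ 3)⁻¹ ^ i := by gcongr
    _ = M * m ! ^ 3 / ((s - 1) ^ 3 / 27) ^ m * (s ^ 3)⁻¹ ^ i := by
        rw [div_pow, ← pow_mul]; field_simp

theorem exists_isGevreyOn_div_weight_curve {T : ℝ} (hT : 0 < T) {z : ℝ → ℝ}
    (hz : ContDiff ℝ ∞ z) {M R s : ℝ} (hM : 0 < M) (hs1 : 1 < s) (hs2 : s ≤ 2) (hsR : s ^ 4 ≤ R)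
    (hzG : ∀ j, ∀ t ∈ Icc 0 T, |iteratedDeriv j z t| ≤ M * (3 * j)! / R ^ (3 * j)) :
    ∃ U : ℝ → ℓ²(ℕ, ℝ), ContDiff ℝ ∞ U ∧ IsGevreyOn 3 U (Icc 0 T) ∧
      ∀ m, ∀ t ∈ Icc 0 T, ∀ i, iteratedDeriv m U t i = iteratedDeriv (i + m) z t / weight s i :=
  exists_isGevreyOn_lp_curve ENNReal.ofNat_ne_top hT (summable_inv_cube_pow hs1)
    (u := fun i m t => iteratedDeriv (i + m) z t / weight s i)
    (fun i m t _ => ((hasDerivAt_iteratedDeriv_of_contDiff hz (i + m) t).div_const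
      (weight s i)).hasDerivWithinAt) hM
    (div_pos (pow_pos (sub_pos.2 hs1) 3) (by norm_num))
    fun m i t ht => abs_div_weight_le hM.le hs1 hs2 hsR (fun j => hzG j t ht) m i

namespace IsGeneratingFamily

variable {a s : ℝ} {g : ℕ → ℝ → ℝ}

theorem abs_mul_weight_le (hg : IsGeneratingFamily a g) (hs1 : 1 < s) (hs2 : s ≤ 2) (l i : ℕ)
    {x : ℝ} (hx : x ∈ Icc (-1 : ℝ) 0) : |iteratedDeriv l (g i) x * weight s i| ≤
      Real.exp (1 + |a|) * l ! / ((s - 1) / (1 + |a|)) ^ l * (s ^ 3)⁻¹ ^ i := by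
  have hs0 : 0 < s := one_pos.trans hs1
  have hs : 0 < s - 1 := sub_pos.2 hs1
  have hw := weight_pos hs0 i
  have hfact := factorial_mul_pow_le hs1.le hs2 (3 * i) l
  rw [abs_mul, abs_of_pos hw]
  set K := 1 + |a|
  have hK : 0 < K := by positivity
  calc |iteratedDeriv l (g i) x| * weight s i
      ≤ Real.exp K * K ^ l / (3 * i - l)! * weight s i := by
        gcongr
        refine (hg.abs_iteratedDeriv_le l i hx).trans ?_
        gcongr
        lia
    _ = Real.exp K * K ^ l * ((3 * i)! * (s - 1) ^ l) /
          ((3 * i - l)! * s ^ (6 * i) * (s - 1) ^ l) := by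
        unfold weight; field_simp
    _ ≤ Real.exp K * K ^ l * (l ! * (3 * i - l)! * s ^ (3 * i)) /
          ((3 * i - l)! * s ^ (6 * i) * (s - 1) ^ l) := by gcongr
    _ = Real.exp K * l ! / ((s - 1) / K) ^ l * (s ^ 3)⁻¹ ^ i := by
        rw [inv_pow, ← pow_mul, show 6 * i = 3 * i + 3 * i by ring, pow_add, div_pow]
        field_simp

theorem exists_isGevreyOn_mul_weight_curve (hg : IsGeneratingFamily a g) (hs1 : 1 < s)
    (hs2 : s ≤ 2) :
    ∃ G : ℝ → ℓ²(ℕ, ℝ), ContDiff ℝ ∞ G ∧ IsGevreyOn 1 G (Icc (-1) 0) ∧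
      ∀ l, ∀ x ∈ Icc (-1 : ℝ) 0, ∀ i,
        iteratedDeriv l G x i = iteratedDeriv l (g i) x * weight s i := by
  refine exists_isGevreyOn_lp_curve ENNReal.ofNat_ne_top (by norm_num) (summable_inv_cube_pow hs1)
    (u := fun i l x => iteratedDeriv l (g i) x * weight s i)
    (fun i l x _ => ((hasDerivAt_iteratedDeriv_of_contDiff (hg.contDiff i) l x).mul_const
      (weight s i)).hasDerivWithinAt) (Real.exp_pos (1 + |a|))
    (div_pos (sub_pos.2 hs1) (by positivity : 0 < 1 + |a|)) fun l i x hx => ?_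
  simpa only [pow_one, Real.norm_eq_abs] using hg.abs_mul_weight_le hs1 hs2 l i hx

end IsGeneratingFamily

end WeightedCurves

theorem stmt10_general {a T : ℝ} (hT : 0 < T) {g : ℕ → ℝ → ℝ} (hg : IsGeneratingFamily a g)
    {z : ℝ → ℝ} (hz : ContDiff ℝ ∞ z) {M R : ℝ} (hM : 0 < M) (hR : 1 < R)
    (hzG : ∀ j, ∀ t ∈ Icc 0 T, |iteratedDeriv j z t| ≤ M * (3 * j)! / R ^ (3 * j)) :
    ∃ y : ℝ → ℝ → ℝ,
      (∀ x ∈ Icc (-1 : ℝ) 0, ∀ t ∈ Icc 0 T,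
        HasSum (fun i => g i x * iteratedDeriv i z t) (y x t)) ∧
      ContDiff ℝ ∞ (fun q : ℝ × ℝ => y q.1 q.2) ∧
      (∃ C R₁ R₂ : ℝ, 0 < C ∧ 0 < R₁ ∧ 0 < R₂ ∧
        ∀ l m, ∀ x ∈ Icc (-1 : ℝ) 0, ∀ t ∈ Icc 0 T,
          |iteratedDeriv l (fun x' => iteratedDeriv m (fun t' => y x' t') t) x| ≤
            C * l ! * m ! ^ 3 / (R₁ ^ l * R₂ ^ m)) ∧
      (∀ x ∈ Ioo (-1 : ℝ) 0, ∀ t ∈ Ioo 0 T,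
        deriv (fun t' => y x t') t + iteratedDeriv 3 (fun x' => y x' t) x +
          a * deriv (fun x' => y x' t) x = 0) ∧
      (∀ t ∈ Ioo 0 T,
        y 0 t = 0 ∧ deriv (fun x' => y x' t) 0 = 0 ∧
          iteratedDeriv 2 (fun x' => y x' t) 0 = z t) := by
  obtain ⟨s, hs1, hs2, hsR⟩ := exists_one_lt_pow_le hR 4
  obtain ⟨G, hG, hGGevrey, hGg⟩ := hg.exists_isGevreyOn_mul_weight_curve hs1 hs2
  obtain ⟨U, hU, hUGevrey, hUz⟩ := exists_isGevreyOn_div_weight_curve hT hz hM hs1 hs2 hsR hzG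
  have hsum (l m : ℕ) {x t : ℝ} (hx : x ∈ Icc (-1 : ℝ) 0) (ht : t ∈ Icc 0 T) :
      HasSum (fun i => iteratedDeriv l (g i) x * iteratedDeriv (i + m) z t)
        (inner ℝ (iteratedDeriv l G x) (iteratedDeriv m U t)) :=
    hasSum_mul_of_weighted (fun i => (weight_pos (one_pos.trans hs1) i).ne')
      (hGg l x hx) (hUz m t ht)
  have hsum₀ (l : ℕ) {x t : ℝ} (hx : x ∈ Icc (-1 : ℝ) 0) (ht : t ∈ Icc 0 T) :
      HasSum (fun i => iteratedDeriv l (g i) x * iteratedDeriv i z t)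
        (inner ℝ (iteratedDeriv l G x) (U t)) := by
    simpa only [add_zero, iteratedDeriv_zero] using hsum l 0 hx ht
  refine ⟨fun x t => inner ℝ (G x) (U t), fun x hx t ht => by simpa using hsum₀ 0 hx ht,
    (hG.comp contDiff_fst).inner ℝ (hU.comp contDiff_snd), ?_, fun x hx t ht => ?_,
    fun t ht => ?_⟩
  · simpa only [pow_one] using hGGevrey.exists_abs_iteratedDeriv_inner_le hUGevrey hG hU
  · have hx := Ioo_subset_Icc_self hx
    have ht := Ioo_subset_Icc_self ht
    simp only [← iteratedDeriv_one, iteratedDeriv_inner_right _ hU, iteratedDeriv_inner_left hG]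
    refine hg.add_add_mul_eq_zero_of_hasSum hx ?_ (hsum₀ 1 hx ht) (hsum₀ 3 hx ht)
    simpa only [iteratedDeriv_zero] using hsum 0 1 hx ht
  · have hx : (0 : ℝ) ∈ Icc (-1) 0 := by norm_num
    have ht := Ioo_subset_Icc_self ht
    simp only [← iteratedDeriv_one, iteratedDeriv_inner_left hG]
    refine ⟨(hsum₀ 0 hx ht).unique ?_, (hsum₀ 1 hx ht).unique ?_,
      (hsum₀ 2 hx ht).unique (hg.hasSum_iteratedDeriv_two_apply_zero _)⟩
    · simp [hg.apply_zero]
    · simp [hg.iteratedDeriv_one_apply_zero]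

/-- flatness property, limit case `s = 3`: if
`|z^{(j)}(t)| ≤ M (3j)!/R^{3j}` on `[0,T]` with `R > 1`, then the series
`y(x,t) = Σ_{i≥0} g_i(x) z^{(i)}(t)` converges, the sum `y` is smooth, Gevrey of order
`1` in `x` and `3` in `t` on `[-1,0]×[0,T]`, and solves `∂ₜy + ∂ₓ³y + a∂ₓy = 0`
with `y(0,t) = ∂ₓy(0,t) = 0`, `∂ₓ²y(0,t) = z(t)`. -/
theorem stmt10 (a : ℝ) (ha : 0 ≤ a) (T : ℝ) (hT : 0 < T)
    (g : ℕ → ℝ → ℝ)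
    (hsmooth : ∀ i, ContDiff ℝ (⊤ : ℕ∞) (g i))
    (hode0 : ∀ x ∈ Set.Icc (-1 : ℝ) 0, deriv^[3] (g 0) x + a * deriv (g 0) x = 0)
    (hic00 : g 0 0 = 0) (hic01 : deriv (g 0) 0 = 0) (hic02 : deriv^[2] (g 0) 0 = 1)
    (hode : ∀ i : ℕ, ∀ x ∈ Set.Icc (-1 : ℝ) 0,
      deriv^[3] (g (i + 1)) x + a * deriv (g (i + 1)) x = - g i x)
    (hic0 : ∀ i : ℕ, g (i + 1) 0 = 0) (hic1 : ∀ i : ℕ, deriv (g (i + 1)) 0 = 0)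
    (hic2 : ∀ i : ℕ, deriv^[2] (g (i + 1)) 0 = 0)
    (z : ℝ → ℝ) (hz : ContDiff ℝ (⊤ : ℕ∞) z) (M R : ℝ) (hM : 0 < M) (hR : 1 < R)
    (hzG : ∀ j : ℕ, ∀ t ∈ Set.Icc (0 : ℝ) T,
      |iteratedDeriv j z t| ≤ M * (Nat.factorial (3 * j) : ℝ) / R ^ (3 * j)) :
    ∃ y : ℝ → ℝ → ℝ,
      (∀ x ∈ Set.Icc (-1 : ℝ) 0, ∀ t ∈ Set.Icc (0 : ℝ) T,
        HasSum (fun i : ℕ => g i x * iteratedDeriv i z t) (y x t)) ∧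
      ContDiff ℝ (⊤ : ℕ∞) (fun q : ℝ × ℝ => y q.1 q.2) ∧
      -- Gevrey of order `1` in `x` and `3` in `t`
      (∃ C R₁ R₂ : ℝ, 0 < C ∧ 0 < R₁ ∧ 0 < R₂ ∧
        ∀ l m : ℕ, ∀ x ∈ Set.Icc (-1 : ℝ) 0, ∀ t ∈ Set.Icc (0 : ℝ) T,
          |iteratedDeriv l (fun x' => iteratedDeriv m (fun t' => y x' t') t) x| ≤
            C * (Nat.factorial l : ℝ) * (Nat.factorial m : ℝ) ^ 3 /
              (R₁ ^ l * R₂ ^ m)) ∧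
      (∀ x ∈ Set.Ioo (-1 : ℝ) 0, ∀ t ∈ Set.Ioo (0 : ℝ) T,
        deriv (fun t' => y x t') t + iteratedDeriv 3 (fun x' => y x' t) x +
          a * deriv (fun x' => y x' t) x = 0) ∧
      (∀ t ∈ Set.Ioo (0 : ℝ) T,
        y 0 t = 0 ∧ deriv (fun x' => y x' t) 0 = 0 ∧
          iteratedDeriv 2 (fun x' => y x' t) 0 = z t) :=
  stmt10_general hT ⟨hsmooth, hode0, hic00, hic01, hic02, hode, hic0, hic1, hic2⟩ hz hM hR hzG
end
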